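/- arXiv:1510.03219 — 3 statements merged into one kernel-verified Lean document; each statement's English description precedes it below -/
import Mathlib

section
/- Let 0 < a < c and set m = a/c. Define h = −(∫₀^{a} s²·((c² − s²)(a² − s²))^{−1/2} ds)/(∫₀^{a} ((c² − s²)(a² − s²))^{−1/2} ds). Then ∫_{a}^{c} (s² + h) · ((c² − s²)(s² − a²))^{−1/2} ds = π c / (2 K(m)), where K(m) = ∫₀¹ ((1 − t²)(1 − m²t²))^{−1/2} dt is the complete elliptic integral of the first kind. -/
open MeasureTheory Set Filter Topology Real

noncomputable def DD (x θ : ℝ) : ℝ := √(1 - x * sin θ ^ 2)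
noncomputable def EE (x : ℝ) : ℝ := ∫ θ in (0:ℝ)..(π/2), DD x θ
noncomputable def KK (x : ℝ) : ℝ := ∫ θ in (0:ℝ)..(π/2), (DD x θ)⁻¹

lemma arg_pos {x : ℝ} (hx : x < 1) (θ : ℝ) : 0 < 1 - x * sin θ ^ 2 := by
  have h := sin_sq_le_one θ
  have h0 := sq_nonneg (sin θ)
  rcases le_or_gt x 0 with h1 | h1 <;> nlinarith

lemma DD_pos {x : ℝ} (hx : x < 1) (θ : ℝ) : 0 < DD x θ := Real.sqrt_pos.2 (arg_pos hx θ)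
lemma DD_sq {x : ℝ} (hx : x < 1) (θ : ℝ) : DD x θ ^ 2 = 1 - x * sin θ ^ 2 :=
  Real.sq_sqrt (arg_pos hx θ).le

lemma DD_cont (x : ℝ) : Continuous (DD x) := by unfold DD; fun_prop
lemma DDinv_cont {x : ℝ} (hx : x < 1) : Continuous (fun θ => (DD x θ)⁻¹) :=
  (DD_cont x).inv₀ (fun θ => (DD_pos hx θ).ne')

lemma DD_lower {x r : ℝ} (hr0 : 0 ≤ r) (hx : x ≤ r) (θ : ℝ) : √(1 - r) ≤ DD x θ := by
  apply Real.sqrt_le_sqrt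
  have h := sin_sq_le_one θ
  have h0 := sq_nonneg (sin θ)
  nlinarith

lemma DD_deriv {x : ℝ} (hx : x < 1) (θ : ℝ) :
    HasDerivAt (fun y => DD y θ) (-(sin θ ^ 2) / (2 * DD x θ)) x := by
  have h : HasDerivAt (fun y : ℝ => 1 - y * sin θ ^ 2) (-(sin θ ^ 2)) x := by
    simpa using ((hasDerivAt_id x).mul_const (sin θ ^ 2)).const_sub 1
  exact h.sqrt (arg_pos hx θ).ne'

lemma DDinv_deriv {x : ℝ} (hx : x < 1) (θ : ℝ) :
    HasDerivAt (fun y => (DD y θ)⁻¹) (sin θ ^ 2 / (2 * DD x θ ^ 3)) x := by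
  have h := (DD_deriv hx θ).inv (DD_pos hx θ).ne'
  have := (DD_pos hx θ).ne'
  refine HasDerivAt.congr_deriv h ?_
  field_simp

lemma EE_deriv0 {x : ℝ} (h1 : -1 < x) (hx : x < 1) :
    HasDerivAt EE (∫ θ in (0:ℝ)..(π/2), -(sin θ ^ 2) / (2 * DD x θ)) x := by
  have hr0 : 0 ≤ (1 + x) / 2 := by linarith
  have hr1 : (1 + x) / 2 < 1 := by linarith
  have hs : 0 < √(1 - (1 + x) / 2) := Real.sqrt_pos.2 (by linarith)
  refine (intervalIntegral.hasDerivAt_integral_of_dominated_loc_of_deriv_le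
    (F := fun y θ => DD y θ) (F' := fun y θ => -(sin θ ^ 2) / (2 * DD y θ))
    (s := Iio ((1 + x) / 2)) (bound := fun _ => 1 / (2 * √(1 - (1 + x) / 2)))
    (Iio_mem_nhds (by linarith)) ?_ ?_ ?_ ?_ ?_ ?_).2
  · exact Eventually.of_forall fun y => (DD_cont y).aestronglyMeasurable
  · exact (DD_cont x).intervalIntegrable _ _
  · have : Continuous fun θ => -(sin θ ^ 2) / (2 * DD x θ) :=
      Continuous.div (by fun_prop) (continuous_const.mul (DD_cont x))
        (fun θ => (mul_pos two_pos (DD_pos hx θ)).ne')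
    exact this.aestronglyMeasurable
  · refine Eventually.of_forall fun θ _ y hy => ?_
    have hl := DD_lower hr0 (le_of_lt hy) θ
    have hp := hs.trans_le hl
    rw [norm_div, norm_neg, Real.norm_of_nonneg (sq_nonneg _),
      Real.norm_of_nonneg (by positivity)]
    have := sin_sq_le_one θ
    gcongr
  · exact intervalIntegrable_const
  · exact Eventually.of_forall fun θ _ y hy => DD_deriv (lt_trans hy hr1) θ

lemma KK_deriv0 {x : ℝ} (h1 : -1 < x) (hx : x < 1) :
    HasDerivAt KK (∫ θ in (0:ℝ)..(π/2), sin θ ^ 2 / (2 * DD x θ ^ 3)) x := by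
  have hr0 : 0 ≤ (1 + x) / 2 := by linarith
  have hr1 : (1 + x) / 2 < 1 := by linarith
  have hs : 0 < √(1 - (1 + x) / 2) := Real.sqrt_pos.2 (by linarith)
  refine (intervalIntegral.hasDerivAt_integral_of_dominated_loc_of_deriv_le
    (F := fun y θ => (DD y θ)⁻¹) (F' := fun y θ => sin θ ^ 2 / (2 * DD y θ ^ 3))
    (s := Iio ((1 + x) / 2)) (bound := fun _ => 1 / (2 * √(1 - (1 + x) / 2) ^ 3))
    (Iio_mem_nhds (by linarith)) ?_ ?_ ?_ ?_ ?_ ?_).2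
  · filter_upwards [Iio_mem_nhds hx] with y hy using (DDinv_cont hy).aestronglyMeasurable
  · exact (DDinv_cont hx).intervalIntegrable _ _
  · have : Continuous fun θ => (sin θ ^ 2) / (2 * DD x θ ^ 3) :=
      Continuous.div (by fun_prop) (continuous_const.mul ((DD_cont x).pow 3))
        (fun θ => (mul_pos two_pos (pow_pos (DD_pos hx θ) 3)).ne')
    exact this.aestronglyMeasurable
  · refine Eventually.of_forall fun θ _ y hy => ?_
    have hl := DD_lower hr0 (le_of_lt hy) θ
    have hp := hs.trans_le hl
    rw [norm_div, Real.norm_of_nonneg (sq_nonneg _),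
      Real.norm_of_nonneg (by positivity)]
    have := sin_sq_le_one θ
    gcongr
  · exact intervalIntegrable_const
  · exact Eventually.of_forall fun θ _ y hy => DDinv_deriv (lt_trans hy hr1) θ

lemma cube_int {x : ℝ} (hx : x < 1) :
    IntervalIntegrable (fun θ => (DD x θ ^ 3)⁻¹) volume 0 (π/2) :=
  (((DD_cont x).pow 3).inv₀ (fun θ => (pow_pos (DD_pos hx θ) 3).ne')).intervalIntegrable _ _

lemma cube_eq {x : ℝ} (hx : x < 1) :
    (1 - x) * ∫ θ in (0:ℝ)..(π/2), (DD x θ ^ 3)⁻¹ = EE x := by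
  have hd : ∀ θ ∈ uIcc (0:ℝ) (π/2), HasDerivAt (fun θ => x * (sin θ * cos θ / DD x θ))
      (DD x θ - (1 - x) * (DD x θ ^ 3)⁻¹) θ := by
    intro θ _
    have h0 := DD_pos hx θ
    have hDs : HasDerivAt (fun θ : ℝ => 1 - x * sin θ ^ 2) (-(x * (2 * sin θ * cos θ))) θ := by
      have := (((hasDerivAt_sin θ).pow 2).const_mul x).const_sub 1
      simpa using this
    have hD : HasDerivAt (DD x) (-(x * (2 * sin θ * cos θ)) / (2 * DD x θ)) θ :=
      hDs.sqrt (arg_pos hx θ).ne'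
    have h := ((((hasDerivAt_sin θ).mul (hasDerivAt_cos θ)).div hD h0.ne').const_mul x)
    refine HasDerivAt.congr_deriv h ?_
    have e := DD_sq hx θ
    have e2 := sin_sq_add_cos_sq θ
    try simp only [Pi.mul_apply]
    generalize DD x θ = d at *
    generalize sin θ = s at *
    generalize cos θ = k at *
    have ek : k ^ 2 = 1 - s ^ 2 := by linarith
    field_simp
    rw [show d ^ 4 = (d ^ 2) ^ 2 by ring, e]
    ring_nf
    rw [ek]
    ring
  have hi := (cube_int hx).const_mul (1 - x)
  have hE := (DD_cont x).intervalIntegrable (μ := volume) 0 (π/2)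
  have := intervalIntegral.integral_eq_sub_of_hasDerivAt hd (hE.sub hi)
  rw [intervalIntegral.integral_sub hE hi, intervalIntegral.integral_const_mul] at this
  simp at this
  unfold EE
  linarith

lemma EE_deriv {x : ℝ} (h1 : 0 < x) (hx : x < 1) :
    HasDerivAt EE ((EE x - KK x) / (2 * x)) x := by
  convert EE_deriv0 (by linarith) hx using 1
  unfold EE KK
  rw [← intervalIntegral.integral_sub ((DD_cont x).intervalIntegrable _ _)
    ((DDinv_cont hx).intervalIntegrable _ _), ← intervalIntegral.integral_div]
  congr 1; ext θ
  have h0 := DD_pos hx θ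
  have e := DD_sq hx θ
  field_simp
  linarith

lemma KK_deriv {x : ℝ} (h1 : 0 < x) (hx : x < 1) :
    HasDerivAt KK ((EE x / (1 - x) - KK x) / (2 * x)) x := by
  convert KK_deriv0 (by linarith) hx using 1
  rw [← cube_eq hx, mul_div_cancel_left₀ _ (by linarith)]
  unfold KK
  rw [← intervalIntegral.integral_sub (cube_int hx)
    ((DDinv_cont hx).intervalIntegrable _ _), ← intervalIntegral.integral_div]
  congr 1; ext θ
  have h0 := DD_pos hx θ
  have e := DD_sq hx θ
  field_simp
  linarith

noncomputable def WW (x : ℝ) : ℝ := EE (1 - x) * KK x - (KK x - EE x) * KK (1 - x)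

lemma WW_deriv {x : ℝ} (h1 : 0 < x) (hx : x < 1) : HasDerivAt WW 0 x := by
  have hs : HasDerivAt (fun y : ℝ => 1 - y) (-1) x := by
    simpa using (hasDerivAt_id x).const_sub 1
  have e1 := EE_deriv h1 hx
  have k1 := KK_deriv h1 hx
  have e2 := (EE_deriv (x := 1 - x) (by linarith) (by linarith)).comp x hs
  have k2 := (KK_deriv (x := 1 - x) (by linarith) (by linarith)).comp x hs
  refine HasDerivAt.congr_deriv ((e2.mul k1).sub ((k1.sub e1).mul k2)) ?_
  have : 1 - x ≠ 0 := by linarith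
  try simp only [Function.comp, Pi.sub_apply]
  rw [show 1 - (1 - x) = x by ring]
  field_simp
  ring

lemma EE_cont : Continuous EE := by
  apply intervalIntegral.continuous_parametric_intervalIntegral_of_continuous'
  unfold Function.uncurry DD
  fun_prop

lemma EE_one : EE 1 = 1 := by
  have : EE 1 = ∫ θ in (0:ℝ)..(π/2), cos θ := by
    apply intervalIntegral.integral_congr
    intro θ hθ
    rw [uIcc_of_le (by positivity)] at hθ
    have : 0 ≤ cos θ := cos_nonneg_of_mem_Icc ⟨by linarith [hθ.1, pi_pos], hθ.2⟩
    simp only [DD]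
    rw [one_mul, ← cos_sq', Real.sqrt_sq this]
  rw [this]; simp

lemma KK_zero : KK 0 = π / 2 := by simp [KK, DD]

lemma KK_nonneg (x : ℝ) : 0 ≤ KK x :=
  intervalIntegral.integral_nonneg (by positivity) fun θ _ => inv_nonneg.2 (Real.sqrt_nonneg _)

lemma KK_le {x : ℝ} (h0 : 0 ≤ x) (hx : x < 1) : KK x ≤ (π/2) * (√(1 - x))⁻¹ := by
  have hs : 0 < √(1 - x) := Real.sqrt_pos.2 (by linarith)
  have := intervalIntegral.integral_mono_on (a := 0) (b := π/2) (μ := volume) (by positivity)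
    ((DDinv_cont hx).intervalIntegrable _ _)
    (intervalIntegrable_const (c := (√(1 - x))⁻¹))
    (fun θ _ => inv_anti₀ hs (DD_lower h0 le_rfl θ))
  simpa [KK] using this

lemma KE_bound {x : ℝ} (h0 : 0 ≤ x) (hx : x < 1) :
    0 ≤ KK x - EE x ∧ KK x - EE x ≤ x * KK x := by
  have hK := (DDinv_cont hx).intervalIntegrable (μ := volume) 0 (π/2)
  have hE := (DD_cont x).intervalIntegrable (μ := volume) 0 (π/2)
  unfold KK EE
  rw [← intervalIntegral.integral_sub hK hE, ← intervalIntegral.integral_const_mul]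
  have key : ∀ θ, (DD x θ)⁻¹ - DD x θ = x * sin θ ^ 2 * (DD x θ)⁻¹ := by
    intro θ
    have h0 := DD_pos hx θ
    have e := DD_sq hx θ
    field_simp
    linarith
  constructor
  · refine intervalIntegral.integral_nonneg (by positivity) fun θ _ => ?_
    rw [key]
    have := DD_pos hx θ
    positivity
  · refine intervalIntegral.integral_mono_on (by positivity) (hK.sub hE) (hK.const_mul x) ?_
    intro θ _
    rw [key]
    have := DD_pos hx θ
    have := sin_sq_le_one θ
    have : x * sin θ ^ 2 ≤ x := by nlinarith
    gcongr

lemma WW_lim : Tendsto WW (𝓝[>] 0) (𝓝 (π/2)) := by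
  have hK : Tendsto KK (𝓝[>] 0) (𝓝 (π/2)) := by
    rw [← KK_zero]
    exact (KK_deriv0 (x := 0) (by norm_num) (by norm_num)).continuousAt.tendsto.mono_left
      nhdsWithin_le_nhds
  have hE : Tendsto (fun x => EE (1 - x)) (𝓝[>] 0) (𝓝 1) := by
    have : Continuous fun x => EE (1 - x) := EE_cont.comp (by fun_prop)
    have h := this.tendsto 0
    simp only [sub_zero, EE_one] at h
    exact h.mono_left nhdsWithin_le_nhds
  have hsq : Tendsto (fun x : ℝ => √x) (𝓝[>] 0) (𝓝 0) := by
    have h := Real.continuous_sqrt.tendsto 0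
    rw [Real.sqrt_zero] at h
    exact h.mono_left nhdsWithin_le_nhds
  have hev : ∀ᶠ x : ℝ in 𝓝[>] 0, 0 < x ∧ x < 1 := Ioo_mem_nhdsGT one_pos
  have h2 : Tendsto (fun x => (KK x - EE x) * KK (1 - x)) (𝓝[>] 0) (𝓝 0) := by
    have hb : Tendsto (fun x => KK x * (π/2) * √x) (𝓝[>] 0) (𝓝 0) := by
      simpa using (hK.mul_const (π/2)).mul hsq
    refine tendsto_of_tendsto_of_tendsto_of_le_of_le' tendsto_const_nhds hb ?_ ?_
    · filter_upwards [hev] with x hx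
      exact mul_nonneg (KE_bound hx.1.le hx.2).1 (KK_nonneg _)
    · filter_upwards [hev] with x hx
      have h1 := (KE_bound hx.1.le hx.2).2
      have h3 := KK_le (x := 1 - x) (by linarith [hx.2]) (by linarith [hx.1])
      rw [sub_sub_cancel] at h3
      have hs : 0 < √x := Real.sqrt_pos.2 hx.1
      have hss : √x * √x = x := Real.mul_self_sqrt hx.1.le
      calc _ ≤ (x * KK x) * ((π/2) * (√x)⁻¹) :=
            mul_le_mul h1 h3 (KK_nonneg _) (mul_nonneg hx.1.le (KK_nonneg _))
        _ = (√x * √x) * KK x * ((π/2) * (√x)⁻¹) := by rw [hss]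
        _ = _ := by field_simp
  have := (hE.mul hK).sub h2
  rw [one_mul, sub_zero] at this
  exact this

lemma WW_eq {x : ℝ} (h1 : 0 < x) (hx : x < 1) : WW x = π / 2 := by
  obtain ⟨k, hk⟩ := isOpen_Ioo.exists_is_const_of_deriv_eq_zero (isPreconnected_Ioo (a := (0:ℝ)) (b := 1))
    (f := WW) (fun y hy => (WW_deriv hy.1 hy.2).differentiableAt.differentiableWithinAt)
    (fun y hy => (WW_deriv hy.1 hy.2).deriv)
  rw [hk x ⟨h1, hx⟩]
  have : Tendsto WW (𝓝[>] 0) (𝓝 k) := by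
    refine tendsto_const_nhds.congr' ?_
    filter_upwards [Ioo_mem_nhdsGT one_pos] with y hy using (hk y hy).symm
  exact tendsto_nhds_unique this WW_lim

lemma subst_gen (f f' g G : ℝ → ℝ) (p q : ℝ) (hpq : p ≤ q)
    (hd : ∀ θ ∈ Ioo 0 (π/2), HasDerivAt f (f' θ) θ)
    (hinj : InjOn f (Ioo 0 (π/2))) (him : f '' Ioo 0 (π/2) = Ioo p q)
    (hG : ∀ θ ∈ Ioo 0 (π/2), |f' θ| * g (f θ) = G θ) :
    ∫ s in p..q, g s = ∫ θ in (0:ℝ)..(π/2), G θ := by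
  rw [intervalIntegral.integral_of_le hpq, intervalIntegral.integral_of_le (by positivity),
    integral_Ioc_eq_integral_Ioo, integral_Ioc_eq_integral_Ioo, ← him,
    integral_image_eq_integral_abs_deriv_smul measurableSet_Ioo
      (fun θ hθ => (hd θ hθ).hasDerivWithinAt) hinj]
  exact setIntegral_congr_fun measurableSet_Ioo hG

lemma sc_pos {θ : ℝ} (h : θ ∈ Ioo 0 (π/2)) : 0 < sin θ ∧ 0 < cos θ :=
  ⟨sin_pos_of_pos_of_lt_pi h.1 (by linarith [h.2, pi_pos]),
    cos_pos_of_mem_Ioo ⟨by linarith [h.1, pi_pos], h.2⟩⟩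

lemma sin_inj : InjOn sin (Ioo 0 (π/2)) :=
  injOn_sin.mono (Ioo_subset_Icc_self.trans (Icc_subset_Icc_left (by linarith [pi_pos])))

lemma subst_sin (a : ℝ) (ha : 0 < a) (g G : ℝ → ℝ)
    (hG : ∀ θ ∈ Ioo 0 (π/2), (a * cos θ) * g (a * sin θ) = G θ) :
    ∫ s in (0:ℝ)..a, g s = ∫ θ in (0:ℝ)..(π/2), G θ := by
  refine subst_gen (fun θ => a * sin θ) (fun θ => a * cos θ) g G 0 a ha.le
    (fun θ _ => (hasDerivAt_sin θ).const_mul a) ?_ ?_ ?_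
  · intro x hx y hy h
    exact sin_inj hx hy (mul_left_cancel₀ ha.ne' h)
  · apply Subset.antisymm
    · rintro _ ⟨θ, hθ, rfl⟩
      obtain ⟨h1, h2⟩ := sc_pos hθ
      have := sin_sq_add_cos_sq θ
      have h3 : sin θ < 1 := by nlinarith
      exact ⟨by positivity, by nlinarith⟩
    · have := intermediate_value_Ioo (a := 0) (b := π/2) (f := fun θ => a * sin θ) (by positivity)
        (by fun_prop)
      simpa using this
  · intro θ hθ
    rw [← hG θ hθ, abs_of_pos (mul_pos ha (sc_pos hθ).2)]

lemma subst_B (c x : ℝ) (hc : 0 < c) (h0 : 0 < x) (hx : x < 1) (g G : ℝ → ℝ)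
    (hG : ∀ θ ∈ Ioo 0 (π/2), (c * (x * sin θ * cos θ / DD x θ)) * g (c * DD x θ) = G θ) :
    ∫ s in (c * √(1 - x))..c, g s = ∫ θ in (0:ℝ)..(π/2), G θ := by
  have hs1 : √(1 - x) < 1 := by
    rw [Real.sqrt_lt' one_pos]; linarith
  refine subst_gen (fun θ => c * DD x θ) (fun θ => -(c * (x * sin θ * cos θ / DD x θ))) g G _ _
    (by nlinarith) ?_ ?_ ?_ ?_
  · intro θ _
    have hDs : HasDerivAt (fun θ : ℝ => 1 - x * sin θ ^ 2) (-(x * (2 * sin θ * cos θ))) θ := by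
      have := (((hasDerivAt_sin θ).pow 2).const_mul x).const_sub 1
      simpa using this
    have hD : HasDerivAt (DD x) (-(x * (2 * sin θ * cos θ)) / (2 * DD x θ)) θ :=
      hDs.sqrt (arg_pos hx θ).ne'
    refine HasDerivAt.congr_deriv (hD.const_mul c) ?_
    have := DD_pos hx θ
    field_simp
  · intro y hy z hz h
    have h : DD x y = DD x z := mul_left_cancel₀ hc.ne' h
    have e1 := DD_sq hx y
    rw [h, DD_sq hx z] at e1
    have e2 : sin y ^ 2 = sin z ^ 2 := by
      have : x * sin y ^ 2 = x * sin z ^ 2 := by linarith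
      exact mul_left_cancel₀ h0.ne' this
    apply sin_inj hy hz
    exact (sq_eq_sq₀ (sc_pos hy).1.le (sc_pos hz).1.le).1 e2
  · apply Subset.antisymm
    · rintro _ ⟨θ, hθ, rfl⟩
      obtain ⟨h1, h2⟩ := sc_pos hθ
      have := sin_sq_add_cos_sq θ
      have h3 : sin θ ^ 2 < 1 := by nlinarith
      refine ⟨mul_lt_mul_of_pos_left (Real.sqrt_lt_sqrt (by linarith) (by nlinarith)) hc, ?_⟩
      have : DD x θ < 1 := by
        unfold DD; rw [Real.sqrt_lt' one_pos]
        have : 0 < x * sin θ ^ 2 := by positivity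
        linarith
      simp only
      nlinarith
    · have := intermediate_value_Ioo' (a := 0) (b := π/2) (f := fun θ => c * DD x θ)
        (by positivity) (continuous_const.mul (DD_cont x)).continuousOn
      simpa [DD] using this
  · intro θ hθ
    obtain ⟨h1, h2⟩ := sc_pos hθ
    have := DD_pos hx θ
    rw [← hG θ hθ, abs_neg, abs_of_pos (by positivity)]

lemma KK_pos {x : ℝ} (hx : x < 1) : 0 < KK x :=
  intervalIntegral.intervalIntegral_pos_of_pos ((DDinv_cont hx).intervalIntegrable _ _)
    (fun θ => inv_pos.2 (DD_pos hx θ)) (by positivity)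

lemma sqrtA {a c θ : ℝ} (ha : 0 < a) (hac : a < c) (hθ : θ ∈ Ioo 0 (π/2)) :
    √((c ^ 2 - (a * sin θ) ^ 2) * (a ^ 2 - (a * sin θ) ^ 2))
      = c * DD ((a / c) ^ 2) θ * (a * cos θ) := by
  have hc := ha.trans hac
  have hx : (a / c) ^ 2 < 1 := by
    rw [sq_lt_one_iff₀ (by positivity)]; exact (div_lt_one hc).2 hac
  have := DD_pos hx θ
  have h2 := (sc_pos hθ).2
  rw [Real.sqrt_eq_iff_mul_self_eq_of_pos (by positivity)]
  have e := DD_sq hx θ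
  have e2 := sin_sq_add_cos_sq θ
  have e3 : cos θ ^ 2 = 1 - sin θ ^ 2 := by linarith
  calc _ = c ^ 2 * DD ((a / c) ^ 2) θ ^ 2 * (a ^ 2 * cos θ ^ 2) := by ring
    _ = _ := by rw [e, e3]; field_simp

lemma sqrtB {a c θ : ℝ} (ha : 0 < a) (hac : a < c) (hθ : θ ∈ Ioo 0 (π/2)) :
    √((c ^ 2 - (c * DD (1 - (a / c) ^ 2) θ) ^ 2) * ((c * DD (1 - (a / c) ^ 2) θ) ^ 2 - a ^ 2))
      = c ^ 2 * (1 - (a / c) ^ 2) * sin θ * cos θ := by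
  have hc := ha.trans hac
  have hx : (a / c) ^ 2 < 1 := by
    rw [sq_lt_one_iff₀ (by positivity)]; exact (div_lt_one hc).2 hac
  have hx' : 1 - (a / c) ^ 2 < 1 := by
    have : 0 < (a / c) ^ 2 := by positivity
    linarith
  have hx0 : 0 < 1 - (a / c) ^ 2 := by linarith
  obtain ⟨h1, h2⟩ := sc_pos hθ
  rw [Real.sqrt_eq_iff_mul_self_eq_of_pos (by positivity)]
  have e := DD_sq hx' θ
  have e2 := sin_sq_add_cos_sq θ
  have e3 : cos θ ^ 2 = 1 - sin θ ^ 2 := by linarith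
  calc _ = c ^ 4 * (1 - (a / c) ^ 2) ^ 2 * sin θ ^ 2 * cos θ ^ 2 := by ring
    _ = _ := by rw [mul_pow, e, e3]; field_simp; ring


/-- identity (2.16)(b) of Lemma 2.3 in concrete form:
`∫_a^c (s² + h)·((c² − s²)(s² − a²))^{-1/2} ds = πc/(2K(m))` with `m = a/c` and
`h` the normalized first moment of the gap weight. -/
theorem wave_number_elliptic_eval (a c : ℝ) (ha : 0 < a) (hac : a < c) :
    ∫ s in a..c,
      (s ^ 2 +
        (-(∫ s in (0:ℝ)..a, s ^ 2 * (Real.sqrt ((c ^ 2 - s ^ 2) * (a ^ 2 - s ^ 2)))⁻¹) /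
          (∫ s in (0:ℝ)..a, (Real.sqrt ((c ^ 2 - s ^ 2) * (a ^ 2 - s ^ 2)))⁻¹))) *
        (Real.sqrt ((c ^ 2 - s ^ 2) * (s ^ 2 - a ^ 2)))⁻¹
    = Real.pi * c /
        (2 * ∫ t in (0:ℝ)..1, (Real.sqrt ((1 - t ^ 2) * (1 - (a / c) ^ 2 * t ^ 2)))⁻¹) := by
  have hc := ha.trans hac
  have hx : (a / c) ^ 2 < 1 := by
    rw [sq_lt_one_iff₀ (by positivity)]; exact (div_lt_one hc).2 hac
  have hx0 : 0 < (a / c) ^ 2 := by positivity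
  have hy : 1 - (a / c) ^ 2 < 1 := by linarith
  have hy0 : 0 < 1 - (a / c) ^ 2 := by linarith
  have hK : ∫ t in (0:ℝ)..1, (Real.sqrt ((1 - t ^ 2) * (1 - (a / c) ^ 2 * t ^ 2)))⁻¹
      = KK ((a / c) ^ 2) := by
    apply subst_sin 1 one_pos
    intro θ hθ
    have h2 := (sc_pos hθ).2
    rw [one_mul, one_mul, ← cos_sq', Real.sqrt_mul (sq_nonneg _), Real.sqrt_sq h2.le]
    change cos θ * (cos θ * DD ((a / c) ^ 2) θ)⁻¹ = _
    have := DD_pos hx θ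
    field_simp
  have hA0 : ∫ s in (0:ℝ)..a, (Real.sqrt ((c ^ 2 - s ^ 2) * (a ^ 2 - s ^ 2)))⁻¹
      = KK ((a / c) ^ 2) / c := by
    unfold KK
    rw [← intervalIntegral.integral_div]
    apply subst_sin a ha
    intro θ hθ
    have h2 := (sc_pos hθ).2
    rw [sqrtA ha hac hθ]
    have := DD_pos hx θ
    field_simp
  have hA2 : ∫ s in (0:ℝ)..a, s ^ 2 * (Real.sqrt ((c ^ 2 - s ^ 2) * (a ^ 2 - s ^ 2)))⁻¹
      = c * (KK ((a / c) ^ 2) - EE ((a / c) ^ 2)) := by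
    unfold KK EE
    rw [← intervalIntegral.integral_sub ((DDinv_cont hx).intervalIntegrable _ _)
      ((DD_cont _).intervalIntegrable _ _), ← intervalIntegral.integral_const_mul]
    apply subst_sin a ha
    intro θ hθ
    have h2 := (sc_pos hθ).2
    rw [sqrtA ha hac hθ]
    have := DD_pos hx θ
    have e := DD_sq hx θ
    have e4 : a ^ 2 * sin θ ^ 2 = c ^ 2 * (1 - DD ((a / c) ^ 2) θ ^ 2) := by
      rw [e]; field_simp; ring
    generalize DD ((a / c) ^ 2) θ = d at *
    field_simp
    linarith
  rw [hK, hA0, hA2]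
  set h := -(c * (KK ((a / c) ^ 2) - EE ((a / c) ^ 2))) / (KK ((a / c) ^ 2) / c) with hh
  have hB : ∫ s in a..c, (s ^ 2 + h) * (Real.sqrt ((c ^ 2 - s ^ 2) * (s ^ 2 - a ^ 2)))⁻¹
      = c * EE (1 - (a / c) ^ 2) + h / c * KK (1 - (a / c) ^ 2) := by
    unfold KK EE
    rw [← intervalIntegral.integral_const_mul, ← intervalIntegral.integral_const_mul,
      ← intervalIntegral.integral_add (((DD_cont _).intervalIntegrable _ _).const_mul _)
      (((DDinv_cont hy).intervalIntegrable _ _).const_mul _)]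
    have ea : a = c * √(1 - (1 - (a / c) ^ 2)) := by
      rw [sub_sub_cancel, Real.sqrt_sq (by positivity)]; field_simp
    have := subst_B c _ hc hy0 hy
      (fun s => (s ^ 2 + h) * (Real.sqrt ((c ^ 2 - s ^ 2) * (s ^ 2 - a ^ 2)))⁻¹)
      (fun θ => c * DD (1 - (a / c) ^ 2) θ + h / c * (DD (1 - (a / c) ^ 2) θ)⁻¹) ?_
    · rwa [← ea] at this
    · intro θ hθ
      obtain ⟨h1, h2⟩ := sc_pos hθ
      rw [sqrtB ha hac hθ]
      have := DD_pos hy θ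
      clear_value h
      generalize DD (1 - (a / c) ^ 2) θ = d at *
      generalize 1 - (a / c) ^ 2 = y at *
      field_simp
  rw [hB]
  have hW := WW_eq hx0 hx
  unfold WW at hW
  have hKp := KK_pos hx
  rw [hh]
  clear hB hh hK hA0 hA2
  clear h
  generalize KK ((a / c) ^ 2) = k at *
  generalize KK (1 - (a / c) ^ 2) = k2 at *
  generalize EE (1 - (a / c) ^ 2) = e2 at *
  generalize EE ((a / c) ^ 2) = e at *
  field_simp
  linarith
end

section
/- Let c > 0, ξ ∈ ℝ, and a ∈ (0, c) with ∫₀^{a} (ξ + (c² − a²)/2 − s²)·√((a² − s²)/(c² − s²)) ds = 0, and set m = a/c. Then 24·∫_{a}^{c} (ξ + (c² − a²)/2 − s²)·√((s² − a²)/(c² − s²)) ds = (2πc / K(m)) · (6ξ − c² − a²), where K(m) = ∫₀¹ ((1 − t²)(1 − m²t²))^{−1/2} dt. In particular the phase B(ξ) of the paper satisfies B(ξ) = 2πc(6ξ − c² − a(ξ)²)/K(a(ξ)/c) < 0 for ξ ∈ (−c²/2, c²/3). -/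
open Real Set Filter Topology MeasureTheory

noncomputable section

def eD (m θ : ℝ) : ℝ := Real.sqrt (1 - m * Real.sin θ ^ 2)
def eK (m : ℝ) : ℝ := ∫ θ in (0:ℝ)..(Real.pi / 2), (eD m θ)⁻¹
def eE (m : ℝ) : ℝ := ∫ θ in (0:ℝ)..(Real.pi / 2), eD m θ
def eT (m : ℝ) : ℝ := ∫ θ in (0:ℝ)..(Real.pi / 2), eD m θ ^ 3
def eU (m : ℝ) : ℝ := ∫ θ in (0:ℝ)..(Real.pi / 2), (eD m θ ^ 3)⁻¹

lemma sin_sq_le' (θ : ℝ) : 0 ≤ Real.sin θ ^ 2 ∧ Real.sin θ ^ 2 ≤ 1 :=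
  ⟨sq_nonneg _, Real.sin_sq_le_one θ⟩

lemma arg_pos_s7 {m : ℝ} (hm : m < 1) (θ : ℝ) : 0 < 1 - m * Real.sin θ ^ 2 := by
  obtain ⟨h0, h1⟩ := sin_sq_le' θ
  rcases le_or_gt m 0 with h | h <;> nlinarith

lemma eD_pos {m : ℝ} (hm : m < 1) (θ : ℝ) : 0 < eD m θ := Real.sqrt_pos.2 (arg_pos_s7 hm θ)

lemma eD_sq {m : ℝ} (hm : m < 1) (θ : ℝ) : eD m θ ^ 2 = 1 - m * Real.sin θ ^ 2 :=
  Real.sq_sqrt (arg_pos_s7 hm θ).le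

lemma eD_cont (m : ℝ) : Continuous (eD m) := by unfold eD; fun_prop

lemma eDi_cont {m : ℝ} (hm : m < 1) : Continuous (fun θ => (eD m θ)⁻¹) :=
  (eD_cont m).inv₀ (fun θ => (eD_pos hm θ).ne')

lemma eDi3_cont {m : ℝ} (hm : m < 1) : Continuous (fun θ => (eD m θ ^ 3)⁻¹) :=
  ((eD_cont m).pow 3).inv₀ (fun θ => (pow_pos (eD_pos hm θ) 3).ne')

lemma eD_hasDeriv {m : ℝ} (hm : m < 1) (θ : ℝ) :
    HasDerivAt (eD m) (-(m * Real.sin θ * Real.cos θ) / eD m θ) θ := by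
  have h : HasDerivAt (fun θ => 1 - m * Real.sin θ ^ 2)
      (-(m * (2 * Real.sin θ * Real.cos θ))) θ := by
    have := (((Real.hasDerivAt_sin θ).pow 2).const_mul m).const_sub 1
    exact this.congr_deriv (by simp)
  have := h.sqrt (arg_pos_s7 hm θ).ne'
  refine HasDerivAt.congr_deriv this ?_
  unfold eD
  have : Real.sqrt (1 - m * Real.sin θ ^ 2) ≠ 0 := (eD_pos hm θ).ne'
  field_simp

lemma eD_hasDeriv_m {m : ℝ} (hm : m < 1) (θ : ℝ) :
    HasDerivAt (fun m => eD m θ) (-(Real.sin θ ^ 2) / (2 * eD m θ)) m := by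
  have h : HasDerivAt (fun m => 1 - m * Real.sin θ ^ 2) (-(Real.sin θ ^ 2)) m := by
    simpa using ((hasDerivAt_id m).mul_const (Real.sin θ ^ 2)).const_sub 1
  exact h.sqrt (arg_pos_s7 hm θ).ne'

lemma eDi_hasDeriv_m {m : ℝ} (hm : m < 1) (θ : ℝ) :
    HasDerivAt (fun m => (eD m θ)⁻¹) (Real.sin θ ^ 2 / (2 * eD m θ ^ 3)) m := by
  have hp := (eD_pos hm θ).ne'
  refine HasDerivAt.congr_deriv ((eD_hasDeriv_m hm θ).inv hp) ?_
  field_simp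

/-- third power reduction -/
lemma eT_eq {m : ℝ} (hm : m < 1) : 3 * eT m = 2 * (2 - m) * eE m - (1 - m) * eK m := by
  have hd : ∀ θ ∈ Set.uIcc (0:ℝ) (Real.pi / 2), HasDerivAt
      (fun θ => m * (Real.sin θ * Real.cos θ * eD m θ))
      (3 * eD m θ ^ 3 + (2 * (m - 2)) * eD m θ + (1 - m) * (eD m θ)⁻¹) θ := by
    intro θ _
    refine HasDerivAt.congr_deriv ((((Real.hasDerivAt_sin θ).mul (Real.hasDerivAt_cos θ)).mul
      (eD_hasDeriv hm θ)).const_mul m) ?_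
    have hp := (eD_pos hm θ).ne'
    have h2 := eD_sq hm θ
    have h3 := Real.sin_sq_add_cos_sq θ
    have h4 : eD m θ ^ 4 = (1 - m * Real.sin θ ^ 2) ^ 2 := by rw [← h2]; ring
    have hc : Real.cos θ ^ 2 = 1 - Real.sin θ ^ 2 := by linarith
    simp only [Pi.mul_apply]
    field_simp
    ring_nf
    simp only [h2, h4, hc]
    ring
  have i1 : IntervalIntegrable (fun θ => 3 * eD m θ ^ 3) volume 0 (Real.pi / 2) :=
    (((eD_cont m).pow 3).const_mul 3).intervalIntegrable _ _
  have i2 : IntervalIntegrable (fun θ => (2 * (m - 2)) * eD m θ) volume 0 (Real.pi / 2) :=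
    ((eD_cont m).const_mul _).intervalIntegrable _ _
  have i3 : IntervalIntegrable (fun θ => (1 - m) * (eD m θ)⁻¹) volume 0 (Real.pi / 2) :=
    ((eDi_cont hm).const_mul _).intervalIntegrable _ _
  have := intervalIntegral.integral_eq_sub_of_hasDerivAt hd ((i1.add i2).add i3)
  rw [intervalIntegral.integral_add (i1.add i2) i3, intervalIntegral.integral_add i1 i2] at this
  simp only [intervalIntegral.integral_const_mul] at this
  simp only [Real.sin_zero, Real.cos_pi_div_two, mul_zero, zero_mul, sub_zero] at this
  unfold eT eE eK
  linarith

lemma eU_eq {m : ℝ} (hm : m < 1) : (1 - m) * eU m = eE m := by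
  have hd : ∀ θ ∈ Set.uIcc (0:ℝ) (Real.pi / 2), HasDerivAt
      (fun θ => m * (Real.sin θ * Real.cos θ * (eD m θ)⁻¹))
      (eD m θ + (m - 1) * (eD m θ ^ 3)⁻¹) θ := by
    intro θ _
    have hp := (eD_pos hm θ).ne'
    refine HasDerivAt.congr_deriv ((((Real.hasDerivAt_sin θ).mul (Real.hasDerivAt_cos θ)).mul
      ((eD_hasDeriv hm θ).inv hp)).const_mul m) ?_
    have h2 := eD_sq hm θ
    have h3 := Real.sin_sq_add_cos_sq θ
    have h4 : eD m θ ^ 4 = (1 - m * Real.sin θ ^ 2) ^ 2 := by rw [← h2]; ring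
    have hc : Real.cos θ ^ 2 = 1 - Real.sin θ ^ 2 := by linarith
    simp only [Pi.mul_apply, Pi.inv_apply]
    field_simp
    ring_nf
    simp only [h4, hc, h2]
    ring
  have i2 : IntervalIntegrable (fun θ => eD m θ) volume 0 (Real.pi / 2) :=
    (eD_cont m).intervalIntegrable _ _
  have i3 : IntervalIntegrable (fun θ => (m - 1) * (eD m θ ^ 3)⁻¹) volume 0 (Real.pi / 2) :=
    ((eDi3_cont hm).const_mul _).intervalIntegrable _ _
  have := intervalIntegral.integral_eq_sub_of_hasDerivAt hd (i2.add i3)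
  rw [intervalIntegral.integral_add i2 i3] at this
  simp only [intervalIntegral.integral_const_mul] at this
  simp only [Real.sin_zero, Real.cos_pi_div_two, mul_zero, zero_mul, sub_zero] at this
  unfold eU eE
  linarith

lemma arg_lb {m x : ℝ} (h1 : -1 < m) (hx : x < (1 + m) / 2) (θ : ℝ) :
    (1 - m) / 2 ≤ 1 - x * Real.sin θ ^ 2 := by
  obtain ⟨h0, h1⟩ := sin_sq_le' θ
  nlinarith

lemma eE_hasDeriv0 {m : ℝ} (h1 : -1 < m) (hm : m < 1) :
    HasDerivAt eE (∫ θ in (0:ℝ)..(Real.pi / 2), -(Real.sin θ ^ 2) / (2 * eD m θ)) m := by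
  have hδ : 0 < Real.sqrt ((1 - m) / 2) := Real.sqrt_pos.2 (by linarith)
  refine (intervalIntegral.hasDerivAt_integral_of_dominated_loc_of_deriv_le
    (F := fun m θ => eD m θ) (F' := fun m θ => -(Real.sin θ ^ 2) / (2 * eD m θ))
    (s := Set.Iio ((1 + m) / 2)) (bound := fun _ => 1 / (2 * Real.sqrt ((1 - m) / 2)))
    (Iio_mem_nhds (by linarith)) ?_ ?_ ?_ ?_ ?_ ?_).2
  · exact Eventually.of_forall fun x => (eD_cont x).aestronglyMeasurable
  · exact (eD_cont m).intervalIntegrable _ _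
  · refine Continuous.aestronglyMeasurable ?_
    have := eD_cont m
    exact Continuous.div (by fun_prop) (by fun_prop) fun θ => by
      have := eD_pos hm θ; positivity
  · refine Eventually.of_forall fun θ _ x hx => ?_
    have hx' : x < (1 + m) / 2 := hx
    have hp := eD_pos (m := x) (by linarith) θ
    have hle : Real.sqrt ((1 - m) / 2) ≤ eD x θ := Real.sqrt_le_sqrt (arg_lb h1 hx' θ)
    obtain ⟨h0, h1⟩ := sin_sq_le' θ
    rw [norm_div, norm_neg, Real.norm_of_nonneg h0, Real.norm_of_nonneg (by positivity)]
    gcongr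
  · exact intervalIntegrable_const
  · refine Eventually.of_forall fun θ _ x hx => ?_
    have hx' : x < (1 + m) / 2 := hx
    exact eD_hasDeriv_m (by linarith) θ

lemma eK_hasDeriv0 {m : ℝ} (h1 : -1 < m) (hm : m < 1) :
    HasDerivAt eK (∫ θ in (0:ℝ)..(Real.pi / 2), (Real.sin θ ^ 2) / (2 * eD m θ ^ 3)) m := by
  have hδ : 0 < Real.sqrt ((1 - m) / 2) := Real.sqrt_pos.2 (by linarith)
  refine (intervalIntegral.hasDerivAt_integral_of_dominated_loc_of_deriv_le
    (F := fun m θ => (eD m θ)⁻¹) (F' := fun m θ => (Real.sin θ ^ 2) / (2 * eD m θ ^ 3))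
    (s := Set.Iio ((1 + m) / 2)) (bound := fun _ => 1 / (2 * Real.sqrt ((1 - m) / 2) ^ 3))
    (Iio_mem_nhds (by linarith)) ?_ ?_ ?_ ?_ ?_ ?_).2
  · exact Eventually.of_forall fun x => (eD_cont x).measurable.inv.aestronglyMeasurable
  · exact (eDi_cont hm).intervalIntegrable _ _
  · refine Continuous.aestronglyMeasurable ?_
    have := eD_cont m
    exact Continuous.div (by fun_prop) (by fun_prop) fun θ => by
      have := eD_pos hm θ; positivity
  · refine Eventually.of_forall fun θ _ x hx => ?_
    have hx' : x < (1 + m) / 2 := hx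
    have hp := eD_pos (m := x) (by linarith) θ
    have hle : Real.sqrt ((1 - m) / 2) ≤ eD x θ := Real.sqrt_le_sqrt (arg_lb h1 hx' θ)
    obtain ⟨h0, h1⟩ := sin_sq_le' θ
    rw [norm_div, Real.norm_of_nonneg h0, Real.norm_of_nonneg (by positivity)]
    gcongr
  · exact intervalIntegrable_const
  · refine Eventually.of_forall fun θ _ x hx => ?_
    have hx' : x < (1 + m) / 2 := hx
    exact eDi_hasDeriv_m (by linarith) θ

lemma iK {m : ℝ} (hm : m < 1) : IntervalIntegrable (fun θ => (eD m θ)⁻¹) volume 0 (Real.pi / 2) :=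
  (eDi_cont hm).intervalIntegrable _ _
lemma iE (m : ℝ) : IntervalIntegrable (fun θ => eD m θ) volume 0 (Real.pi / 2) :=
  (eD_cont m).intervalIntegrable _ _
lemma iT (m : ℝ) : IntervalIntegrable (fun θ => eD m θ ^ 3) volume 0 (Real.pi / 2) :=
  ((eD_cont m).pow 3).intervalIntegrable _ _
lemma iU {m : ℝ} (hm : m < 1) :
    IntervalIntegrable (fun θ => (eD m θ ^ 3)⁻¹) volume 0 (Real.pi / 2) :=
  (eDi3_cont hm).intervalIntegrable _ _

lemma eE_hasDeriv {m : ℝ} (h0 : 0 < m) (hm : m < 1) :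
    HasDerivAt eE ((eE m - eK m) / (2 * m)) m := by
  convert eE_hasDeriv0 (by linarith) hm using 1
  unfold eE eK
  rw [← intervalIntegral.integral_sub (iE m) (iK hm), ← intervalIntegral.integral_div]
  congr 1; ext θ
  have hp := (eD_pos hm θ).ne'
  have h2 := eD_sq hm θ
  field_simp
  rw [h2]; ring

lemma eK_hasDeriv {m : ℝ} (h0 : 0 < m) (hm : m < 1) :
    HasDerivAt eK ((eE m / (1 - m) - eK m) / (2 * m)) m := by
  convert eK_hasDeriv0 (by linarith) hm using 1
  have : eE m / (1 - m) = eU m := by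
    rw [← eU_eq hm]; field_simp [(by linarith : (1 - m) ≠ 0)]
  rw [this]
  unfold eU eK
  rw [← intervalIntegral.integral_sub (iU hm) (iK hm), ← intervalIntegral.integral_div]
  congr 1; ext θ
  have hp := (eD_pos hm θ).ne'
  have h2 := eD_sq hm θ
  field_simp
  rw [h2]; ring

lemma eE_cont : Continuous eE := by
  unfold eE
  refine intervalIntegral.continuous_parametric_intervalIntegral_of_continuous' ?_ _ _
  unfold eD Function.uncurry
  fun_prop

lemma eE_one : eE 1 = 1 := by
  unfold eE
  have : ∫ θ in (0:ℝ)..(Real.pi / 2), eD 1 θ = ∫ θ in (0:ℝ)..(Real.pi / 2), Real.cos θ := by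
    refine intervalIntegral.integral_congr fun θ hθ => ?_
    rw [Set.uIcc_of_le (by positivity)] at hθ
    have hc : 0 ≤ Real.cos θ := Real.cos_nonneg_of_mem_Icc ⟨by linarith [hθ.1, Real.pi_pos], hθ.2⟩
    simp only [eD]
    rw [one_mul, ← Real.cos_sq', Real.sqrt_sq hc]
  rw [this]; simp

lemma eK_zero : eK 0 = Real.pi / 2 := by simp [eK, eD]

lemma eK_pos {m : ℝ} (hm : m < 1) : 0 < eK m :=
  intervalIntegral.intervalIntegral_pos_of_pos (iK hm) (fun θ => inv_pos.2 (eD_pos hm θ))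
    (by positivity)

lemma eK_compl_le {m : ℝ} (h0 : 0 < m) (hm : m < 1) :
    eK (1 - m) ≤ (Real.sqrt m)⁻¹ * (Real.pi / 2) := by
  have : ∫ θ in (0:ℝ)..(Real.pi / 2), (Real.sqrt m)⁻¹ = (Real.sqrt m)⁻¹ * (Real.pi / 2) := by
    simp [mul_comm]
  rw [← this]
  refine intervalIntegral.integral_mono_on (by positivity) (iK (by linarith))
    intervalIntegrable_const fun θ _ => ?_
  have : 0 < Real.sqrt m := Real.sqrt_pos.2 h0
  refine inv_anti₀ this (Real.sqrt_le_sqrt ?_)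
  obtain ⟨h0, h1⟩ := sin_sq_le' θ
  nlinarith

lemma eK_sub_eE {m : ℝ} (h0 : 0 < m) (hm : m < 1) :
    0 ≤ eK m - eE m ∧ eK m - eE m ≤ m * eK m := by
  have h : eK m - eE m = ∫ θ in (0:ℝ)..(Real.pi / 2), ((eD m θ)⁻¹ - eD m θ) :=
    (intervalIntegral.integral_sub (iK hm) (iE m)).symm
  have key : ∀ θ, (eD m θ)⁻¹ - eD m θ = m * Real.sin θ ^ 2 * (eD m θ)⁻¹ := fun θ => by
    have hp := (eD_pos hm θ).ne'
    have h2 := eD_sq hm θ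
    field_simp
    rw [h2]; ring
  constructor
  · rw [h]
    refine intervalIntegral.integral_nonneg (by positivity) fun θ _ => ?_
    rw [key]
    have := eD_pos hm θ
    positivity
  · rw [h, eK, ← intervalIntegral.integral_const_mul]
    refine intervalIntegral.integral_mono_on (by positivity) ((iK hm).sub (iE m))
      ((iK hm).const_mul m) fun θ _ => ?_
    rw [key]
    obtain ⟨h3, h4⟩ := sin_sq_le' θ
    have := eD_pos hm θ
    gcongr
    nlinarith

def eW (m : ℝ) : ℝ := eE (1 - m) * eK m - (eK m - eE m) * eK (1 - m)

lemma eW_hasDeriv {m : ℝ} (h0 : 0 < m) (hm : m < 1) : HasDerivAt eW 0 m := by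
  have a1 := eE_hasDeriv h0 hm
  have a2 := eK_hasDeriv h0 hm
  have hs : HasDerivAt (fun m : ℝ => 1 - m) (-1) m := by
    simpa using (hasDerivAt_id m).const_sub 1
  have a3 := (eE_hasDeriv (m := 1 - m) (by linarith) (by linarith)).comp m hs
  have a4 := (eK_hasDeriv (m := 1 - m) (by linarith) (by linarith)).comp m hs
  refine HasDerivAt.congr_deriv ((a3.mul a2).sub ((a2.sub a1).mul a4)) ?_
  have : 1 - m ≠ 0 := by linarith
  have := h0.ne'
  simp only [Function.comp_apply, Pi.sub_apply, sub_sub_cancel]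
  field_simp
  ring

lemma eW_tendsto : Tendsto eW (𝓝[>] 0) (𝓝 (Real.pi / 2)) := by
  have hK : Tendsto eK (𝓝[>] 0) (𝓝 (Real.pi / 2)) := by
    have := (eK_hasDeriv0 (m := 0) (by norm_num) (by norm_num)).continuousAt.tendsto
    rw [eK_zero] at this
    exact this.mono_left nhdsWithin_le_nhds
  have hE : Tendsto (fun m => eE (1 - m)) (𝓝[>] 0) (𝓝 1) := by
    have : Continuous fun m => eE (1 - m) := eE_cont.comp (by fun_prop)
    have := this.tendsto 0
    rw [sub_zero, eE_one] at this
    exact this.mono_left nhdsWithin_le_nhds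
  have hs : Tendsto Real.sqrt (𝓝[>] 0) (𝓝 0) := by
    have := Real.continuous_sqrt.tendsto 0
    rw [Real.sqrt_zero] at this
    exact this.mono_left nhdsWithin_le_nhds
  have hmem : Set.Ioo (0:ℝ) 1 ∈ 𝓝[>] (0:ℝ) := Ioo_mem_nhdsGT one_pos
  have h2 : Tendsto (fun m => (eK m - eE m) * eK (1 - m)) (𝓝[>] 0) (𝓝 0) := by
    have hb : Tendsto (fun m => Real.sqrt m * eK m * (Real.pi / 2)) (𝓝[>] 0) (𝓝 0) := by
      simpa using (hs.mul hK).mul_const (Real.pi / 2)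
    refine tendsto_of_tendsto_of_tendsto_of_le_of_le' tendsto_const_nhds hb ?_ ?_
    · filter_upwards [hmem] with m hm
      exact mul_nonneg (eK_sub_eE hm.1 hm.2).1 (eK_pos (by linarith [hm.1])).le
    · filter_upwards [hmem] with m hm
      have hsq : 0 < Real.sqrt m := Real.sqrt_pos.2 hm.1
      have hm2 : m = Real.sqrt m * Real.sqrt m := (Real.mul_self_sqrt hm.1.le).symm
      have hk := eK_pos hm.2
      calc (eK m - eE m) * eK (1 - m) ≤ (m * eK m) * ((Real.sqrt m)⁻¹ * (Real.pi / 2)) :=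
            mul_le_mul (eK_sub_eE hm.1 hm.2).2 (eK_compl_le hm.1 hm.2)
              (eK_pos (by linarith [hm.1])).le (mul_nonneg hm.1.le hk.le)
        _ = Real.sqrt m * eK m * (Real.pi / 2) := by
            nth_rewrite 1 [hm2]
            field_simp
  have := (hE.mul hK).sub h2
  have e : (1:ℝ) * (Real.pi / 2) - 0 = Real.pi / 2 := by ring
  rw [e] at this
  exact this

/-- Legendre relation -/
lemma legendre {m : ℝ} (h0 : 0 < m) (hm : m < 1) : eW m = Real.pi / 2 := by
  have hd : DifferentiableOn ℝ eW (Set.Ioo 0 1) := fun x hx =>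
    (eW_hasDeriv hx.1 hx.2).differentiableAt.differentiableWithinAt
  have hc : ∀ x ∈ Set.Ioo (0:ℝ) 1, eW x = eW m := fun x hx =>
    isOpen_Ioo.is_const_of_deriv_eq_zero isPreconnected_Ioo hd
      (fun y hy => (eW_hasDeriv hy.1 hy.2).deriv) hx ⟨h0, hm⟩
  have hmem : Set.Ioo (0:ℝ) 1 ∈ 𝓝[>] (0:ℝ) := Ioo_mem_nhdsGT one_pos
  have : Tendsto eW (𝓝[>] 0) (𝓝 (eW m)) :=
    tendsto_const_nhds.congr' (by filter_upwards [hmem] with x hx using (hc x hx).symm)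
  exact tendsto_nhds_unique this eW_tendsto

lemma subst_up {f f' g h : ℝ → ℝ} {a b : ℝ} (hab : a ≤ b) (hf : ContinuousOn f (Icc a b))
    (hff' : ∀ x ∈ Ioo a b, HasDerivAt f (f' x) x) (hf' : ∀ x ∈ Ioo a b, 0 ≤ f' x)
    (hfab : f a ≤ f b)
    (hh : ∀ x ∈ Ioo a b, f' x * g (f x) = h x) :
    ∫ u in (f a)..(f b), g u = ∫ x in a..b, h x := by
  rw [intervalIntegral.integral_of_le hab, intervalIntegral.integral_of_le hfab,
    ← integral_Icc_eq_integral_Ioc, ← integral_Icc_deriv_smul_of_deriv_nonneg hf hff' hf' hab,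
    integral_Icc_eq_integral_Ioo, integral_Ioc_eq_integral_Ioo]
  exact setIntegral_congr_fun measurableSet_Ioo fun x hx => hh x hx

lemma subst_down {f f' g h : ℝ → ℝ} {a b : ℝ} (hab : a ≤ b) (hf : ContinuousOn f (Icc a b))
    (hff' : ∀ x ∈ Ioo a b, HasDerivAt f (f' x) x) (hf' : ∀ x ∈ Ioo a b, f' x ≤ 0)
    (hfab : f b ≤ f a)
    (hh : ∀ x ∈ Ioo a b, -(f' x) * g (f x) = h x) :
    ∫ u in (f b)..(f a), g u = ∫ x in a..b, h x := by
  have := integral_Icc_deriv_smul_of_deriv_nonpos (g := g) hf hff' hf' hab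
  rw [intervalIntegral.integral_of_le hab, intervalIntegral.integral_of_le hfab,
    ← integral_Icc_eq_integral_Ioc, ← neg_eq_iff_eq_neg.2 this, ← integral_neg,
    integral_Icc_eq_integral_Ioo, integral_Ioc_eq_integral_Ioo]
  exact setIntegral_congr_fun measurableSet_Ioo fun x hx => by
    rw [← hh x hx]; simp

lemma combo {m : ℝ} (hm : m < 1) (x y z : ℝ) :
    ∫ θ in (0:ℝ)..(Real.pi / 2), (x * eD m θ ^ 3 + y * eD m θ + z * (eD m θ)⁻¹)
      = x * eT m + y * eE m + z * eK m := by
  have i1 := (iT m).const_mul x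
  have i2 := (iE m).const_mul y
  have i3 := (iK hm).const_mul z
  rw [intervalIntegral.integral_add (i1.add i2) i3, intervalIntegral.integral_add i1 i2]
  simp only [intervalIntegral.integral_const_mul]
  rfl

lemma trig_pos {θ : ℝ} (h : θ ∈ Ioo 0 (Real.pi / 2)) : 0 < Real.sin θ ∧ 0 < Real.cos θ :=
  ⟨Real.sin_pos_of_pos_of_lt_pi h.1 (by linarith [h.2, Real.pi_pos]),
   Real.cos_pos_of_mem_Ioo ⟨by linarith [h.1, Real.pi_pos], h.2⟩⟩

lemma K_subst {k : ℝ} (hm : k ^ 2 < 1) :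
    ∫ t in (0:ℝ)..1, (Real.sqrt ((1 - t ^ 2) * (1 - k ^ 2 * t ^ 2)))⁻¹ = eK (k ^ 2) := by
  have := subst_up (f := Real.sin) (f' := Real.cos) (a := 0) (b := Real.pi / 2)
    (g := fun t => (Real.sqrt ((1 - t ^ 2) * (1 - k ^ 2 * t ^ 2)))⁻¹)
    (h := fun θ => (eD (k ^ 2) θ)⁻¹)
    (by positivity) (by fun_prop) (fun θ _ => Real.hasDerivAt_sin θ)
    (fun θ h => (trig_pos h).2.le) (by simp) (fun θ h => by
      obtain ⟨hs, hc⟩ := trig_pos h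
      have hp := eD_pos hm θ
      rw [← eD_sq hm θ, ← Real.cos_sq', ← mul_pow, Real.sqrt_sq (by positivity)]
      field_simp)
  simpa [eK] using this

lemma norm_subst {a c Q m : ℝ} (hc : 0 < c) (ha : 0 < a) (hm : m < 1) (hmc : m * c ^ 2 = a ^ 2) :
    ∫ s in (0:ℝ)..a, (Q - s ^ 2) * Real.sqrt ((a ^ 2 - s ^ 2) / (c ^ 2 - s ^ 2))
      = c ^ 3 * eT m + c * (Q + a ^ 2 - 2 * c ^ 2) * eE m
        + (Q - c ^ 2) * (a ^ 2 - c ^ 2) / c * eK m := by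
  have := subst_up (f := fun θ => a * Real.sin θ) (f' := fun θ => a * Real.cos θ)
    (a := 0) (b := Real.pi / 2)
    (g := fun s => (Q - s ^ 2) * Real.sqrt ((a ^ 2 - s ^ 2) / (c ^ 2 - s ^ 2)))
    (h := fun θ => c ^ 3 * eD m θ ^ 3 + c * (Q + a ^ 2 - 2 * c ^ 2) * eD m θ
        + (Q - c ^ 2) * (a ^ 2 - c ^ 2) / c * (eD m θ)⁻¹)
    (by positivity) (by fun_prop) (fun θ _ => (Real.hasDerivAt_sin θ).const_mul a)
    (fun θ h => (mul_pos ha (trig_pos h).2).le) (by simpa using ha.le) (fun θ h => by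
      obtain ⟨hs, hco⟩ := trig_pos h
      have hp := eD_pos hm θ
      have h2 := eD_sq hm θ
      have e1 : a ^ 2 - (a * Real.sin θ) ^ 2 = (a * Real.cos θ) ^ 2 := by
        rw [mul_pow, mul_pow, Real.cos_sq']; ring
      have e2 : c ^ 2 - (a * Real.sin θ) ^ 2 = (c * eD m θ) ^ 2 := by
        rw [mul_pow, mul_pow, h2, ← hmc]; ring
      have e3 : (a * Real.cos θ) ^ 2 = a ^ 2 - c ^ 2 + (c * eD m θ) ^ 2 := by
        rw [← e1, ← e2]; ring
      have e4 : (a * Real.sin θ) ^ 2 = c ^ 2 - (c * eD m θ) ^ 2 := by rw [← e2]; ring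
      rw [e1, e2, ← div_pow, Real.sqrt_sq (by positivity), e4]
      have : a * Real.cos θ * ((Q - (c ^ 2 - (c * eD m θ) ^ 2)) * (a * Real.cos θ / (c * eD m θ)))
        = (a * Real.cos θ) ^ 2 * (Q - (c ^ 2 - (c * eD m θ) ^ 2)) / (c * eD m θ) := by ring
      rw [this, e3]
      field_simp
      ring)
  rw [combo hm] at this
  simpa using this

lemma phase_subst0 {a c Q m : ℝ} (hc : 0 < c) (ha : 0 < a) (hac : a < c) (h0 : 0 < m) (hm : m < 1)
    (hmc : m * c ^ 2 = a ^ 2) :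
    ∫ s in a..c, (Q - s ^ 2) * Real.sqrt ((s ^ 2 - a ^ 2) / (c ^ 2 - s ^ 2))
      = ∫ θ in (0:ℝ)..(Real.pi / 2), (-c ^ 3 * eD (1 - m) θ ^ 3 + c * (Q + a ^ 2) * eD (1 - m) θ
        + (-(Q * a ^ 2) / c) * (eD (1 - m) θ)⁻¹) := by
  have hm' : 1 - m < 1 := by linarith
  have f0 : c * eD (1 - m) 0 = c := by simp [eD]
  have f1 : c * eD (1 - m) (Real.pi / 2) = a := by
    have : m = (a / c) ^ 2 := by field_simp; linarith
    simp only [eD, Real.sin_pi_div_two, one_pow, mul_one, sub_sub_cancel]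
    rw [this, Real.sqrt_sq (by positivity)]
    field_simp
  have := subst_down (f := fun θ => c * eD (1 - m) θ)
    (f' := fun θ => c * (-((1 - m) * Real.sin θ * Real.cos θ) / eD (1 - m) θ))
    (a := 0) (b := Real.pi / 2)
    (g := fun s => (Q - s ^ 2) * Real.sqrt ((s ^ 2 - a ^ 2) / (c ^ 2 - s ^ 2)))
    (h := fun θ => -c ^ 3 * eD (1 - m) θ ^ 3 + c * (Q + a ^ 2) * eD (1 - m) θ
        + (-(Q * a ^ 2) / c) * (eD (1 - m) θ)⁻¹)
    (by positivity) ((eD_cont _).const_mul c).continuousOn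
    (fun θ _ => (eD_hasDeriv hm' θ).const_mul c)
    (fun θ h => by
      obtain ⟨hs, hco⟩ := trig_pos h
      have hp := eD_pos hm' θ
      have h1 : 0 < 1 - m := by linarith
      have : 0 ≤ c * (((1 - m) * Real.sin θ * Real.cos θ) / eD (1 - m) θ) := by positivity
      rw [neg_div]; linarith) (by rw [f0, f1]; exact hac.le) (fun θ h => by
      obtain ⟨hs, hco⟩ := trig_pos h
      have hp := eD_pos hm' θ
      have h2 := eD_sq hm' θ
      have h1 : 0 < 1 - m := by linarith
      have e2 : c ^ 2 - (c * eD (1 - m) θ) ^ 2 = c ^ 2 * (1 - m) * Real.sin θ ^ 2 := by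
        rw [mul_pow, h2]; ring
      have e1 : (c * eD (1 - m) θ) ^ 2 - a ^ 2 = c ^ 2 * (1 - m) * Real.cos θ ^ 2 := by
        rw [mul_pow, h2, ← hmc, Real.cos_sq']; ring
      have e3 : (c ^ 2 * (1 - m) * Real.cos θ ^ 2) / (c ^ 2 * (1 - m) * Real.sin θ ^ 2)
        = (Real.cos θ / Real.sin θ) ^ 2 := by field_simp
      rw [e1, e2, e3, Real.sqrt_sq (by positivity)]
      have : -(c * (-((1 - m) * Real.sin θ * Real.cos θ) / eD (1 - m) θ)) *
          ((Q - (c * eD (1 - m) θ) ^ 2) * (Real.cos θ / Real.sin θ))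
        = (c ^ 2 * (1 - m) * Real.cos θ ^ 2) * (Q - (c * eD (1 - m) θ) ^ 2)
          / (c * eD (1 - m) θ) := by field_simp
      rw [this, ← e1]
      field_simp
      ring)
  simp only [f0, f1] at this
  exact this

lemma Q_lt {a c Q : ℝ} (ha : 0 < a) (hac : a < c)
    (h : ∫ s in (0:ℝ)..a, (Q - s ^ 2) * Real.sqrt ((a ^ 2 - s ^ 2) / (c ^ 2 - s ^ 2)) = 0) :
    Q < a ^ 2 := by
  by_contra hQ
  push Not at hQ
  have : 0 < ∫ s in (0:ℝ)..a, (Q - s ^ 2) * Real.sqrt ((a ^ 2 - s ^ 2) / (c ^ 2 - s ^ 2)) := by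
    refine intervalIntegral.intervalIntegral_pos_of_pos_on ?_ (fun s hs => ?_) ha
    · refine ContinuousOn.intervalIntegrable ?_
      rw [uIcc_of_le ha.le]
      refine ContinuousOn.mul (by fun_prop) (ContinuousOn.sqrt (ContinuousOn.div (by fun_prop)
        (by fun_prop) fun s hs => ?_))
      have := hs.1
      have := hs.2
      nlinarith
    · have h1 := hs.1
      have h2 := hs.2
      have : 0 < a ^ 2 - s ^ 2 := by nlinarith
      have : 0 < c ^ 2 - s ^ 2 := by nlinarith
      exact mul_pos (by linarith) (Real.sqrt_pos.2 (by positivity))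
  linarith

lemma phase_neg {a c Q m : ℝ} (hc : 0 < c) (ha : 0 < a) (hac : a < c) (h0 : 0 < m) (hm : m < 1)
    (hmc : m * c ^ 2 = a ^ 2) (hQ : Q < a ^ 2) :
    ∫ s in a..c, (Q - s ^ 2) * Real.sqrt ((s ^ 2 - a ^ 2) / (c ^ 2 - s ^ 2)) < 0 := by
  have hm' : 1 - m < 1 := by linarith
  rw [phase_subst0 hc ha hac h0 hm hmc, ← neg_pos, ← intervalIntegral.integral_neg]
  refine intervalIntegral.intervalIntegral_pos_of_pos_on ?_ (fun θ hθ => ?_) (by positivity)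
  · exact ((((iT _).const_mul _).add ((iE _).const_mul _)).add ((iK hm').const_mul _)).neg
  · obtain ⟨hs, hco⟩ := trig_pos hθ
    have hp := eD_pos hm' θ
    have h2 := eD_sq hm' θ
    have h1 : 0 < 1 - m := by linarith
    have e1 : (c * eD (1 - m) θ) ^ 2 - a ^ 2 = c ^ 2 * (1 - m) * Real.cos θ ^ 2 := by
      rw [mul_pow, h2, ← hmc, Real.cos_sq']; ring
    have p1 : 0 < (c * eD (1 - m) θ) ^ 2 - a ^ 2 := by rw [e1]; positivity
    have p2 : 0 < (c * eD (1 - m) θ) ^ 2 - Q := by linarith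
    have : 0 < ((c * eD (1 - m) θ) ^ 2 - Q) * ((c * eD (1 - m) θ) ^ 2 - a ^ 2)
        / (c * eD (1 - m) θ) := by positivity
    convert this using 1
    field_simp
    ring

end


/-- identity (3.2) of Lemma 3.2: under the normalization condition, the phase
`B(ξ) = 24·∫_a^c (ξ + (c² − a²)/2 − s²)·√((s² − a²)/(c² − s²)) ds` equals
`2πc(6ξ − c² − a²)/K(a/c)`; in particular it is negative for `ξ ∈ (−c²/2, c²/3)`. -/
theorem phase_equals_GP_phase (c ξ a : ℝ) (hc : 0 < c) (ha : 0 < a) (hac : a < c)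
    (hnorm : ∫ s in (0:ℝ)..a,
        (ξ + (c ^ 2 - a ^ 2) / 2 - s ^ 2) * Real.sqrt ((a ^ 2 - s ^ 2) / (c ^ 2 - s ^ 2)) = 0) :
    24 * ∫ s in a..c,
        (ξ + (c ^ 2 - a ^ 2) / 2 - s ^ 2) * Real.sqrt ((s ^ 2 - a ^ 2) / (c ^ 2 - s ^ 2))
      = 2 * Real.pi * c /
          (∫ t in (0:ℝ)..1, (Real.sqrt ((1 - t ^ 2) * (1 - (a / c) ^ 2 * t ^ 2)))⁻¹) *
          (6 * ξ - c ^ 2 - a ^ 2) ∧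
    (ξ ∈ Set.Ioo (-c ^ 2 / 2) (c ^ 2 / 3) →
      24 * (∫ s in a..c,
        (ξ + (c ^ 2 - a ^ 2) / 2 - s ^ 2) * Real.sqrt ((s ^ 2 - a ^ 2) / (c ^ 2 - s ^ 2))) < 0) := by
  have hm0 : 0 < (a / c) ^ 2 := by positivity
  have hm1 : (a / c) ^ 2 < 1 := by
    rw [div_pow, div_lt_one (by positivity)]; nlinarith
  have hmc : (a / c) ^ 2 * c ^ 2 = a ^ 2 := by field_simp
  have hQ := Q_lt ha hac hnorm
  refine ⟨?_, fun _ => ?_⟩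
  · rw [norm_subst hc ha hm1 hmc] at hnorm
    rw [phase_subst0 hc ha hac hm0 hm1 hmc, combo (by linarith), K_subst hm1]
    have hK := eK_pos hm1
    have hT := eT_eq hm1
    have hT' := eT_eq (m := 1 - (a / c) ^ 2) (by linarith)
    have hL := legendre hm0 hm1
    unfold eW at hL
    generalize eT ((a / c) ^ 2) = T at *
    generalize eT (1 - (a / c) ^ 2) = T' at *
    generalize eK ((a / c) ^ 2) = K at *
    generalize eK (1 - (a / c) ^ 2) = K' at *
    generalize eE ((a / c) ^ 2) = E at *
    generalize eE (1 - (a / c) ^ 2) = E' at *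
    generalize (a / c) ^ 2 = m at *
    have hpi : Real.pi = 2 * (E' * K - (K - E) * K') := by linarith
    obtain rfl : T = (2 * (2 - m) * E - (1 - m) * K) / 3 := by linarith
    obtain rfl : T' = (2 * (2 - (1 - m)) * E' - (1 - (1 - m)) * K') / 3 := by linarith
    rw [hpi]
    rw [← hmc] at hnorm ⊢
    have hnorm' := congrArg (fun z => z / c) hnorm
    field_simp at hnorm' ⊢
    apply mul_left_cancel₀ hc.ne'
    linear_combination (-24 * K') * hnorm'
  · have := phase_neg hc ha hac hm0 hm1 hmc hQ
    linarith
end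

section
/- Let c > 0 and let a : (−c²/2, c²/3) → (0, c) be differentiable with ∫₀^{a(ξ)} (ξ + (c² − a(ξ)²)/2 − s²)·√((a(ξ)² − s²)/(c² − s²)) ds = 0 for every ξ in the interval, and set m(ξ) = a(ξ)/c. Define B(ξ) = 24·∫_{a(ξ)}^{c} (ξ + (c² − a(ξ)²)/2 − s²)·√((s² − a(ξ)²)/(c² − s²)) ds and Γ(ξ) = −(1/2)·(∫_{−a(ξ)}^{a(ξ)} ((c² − s²)(a(ξ)² − s²))^{−1/2} ds)^{−1}. Then for every ξ ∈ (−c²/2, c²/3), (Γ(ξ)/(6π)) · B′(ξ) = −c² / (2 K(m(ξ))²), where K(m) = ∫₀¹ ((1 − t²)(1 − m²t²))^{−1/2} dt. -/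
section
open Real

noncomputable def tcD (p q θ : ℝ) : ℝ := p * cos θ ^ 2 + q * sin θ ^ 2
noncomputable def tcG (p q : ℝ) : ℝ := ∫ θ in (0:ℝ)..(π/2), (√(tcD p q θ))⁻¹
noncomputable def tcH (p q : ℝ) : ℝ := ∫ θ in (0:ℝ)..(π/2), √(tcD p q θ)
noncomputable def tcM (p q : ℝ) : ℝ := ∫ θ in (0:ℝ)..(π/2), tcD p q θ * √(tcD p q θ)
noncomputable def tcL (p q : ℝ) : ℝ := ∫ θ in (0:ℝ)..(π/2), (tcD p q θ * √(tcD p q θ))⁻¹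

lemma tcD_cont (p q : ℝ) : Continuous (tcD p q) := by unfold tcD; fun_prop

lemma tcD_ge {p q m : ℝ} (hp : m ≤ p) (hq : m ≤ q) (θ : ℝ) : m ≤ tcD p q θ := by
  unfold tcD
  have e : m * (sin θ ^ 2 + cos θ ^ 2) = m := by rw [sin_sq_add_cos_sq, mul_one]
  nlinarith [mul_nonneg (sub_nonneg.2 hp) (sq_nonneg (cos θ)),
    mul_nonneg (sub_nonneg.2 hq) (sq_nonneg (sin θ))]

lemma tcD_pos {p q : ℝ} (hp : 0 < p) (hq : 0 < q) (θ : ℝ) : 0 < tcD p q θ :=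
  lt_of_lt_of_le (lt_min hp hq) (tcD_ge (min_le_left _ _) (min_le_right _ _) θ)

lemma tcD_cos (p q θ : ℝ) : tcD p q θ - q = (p - q) * cos θ ^ 2 := by
  unfold tcD; rw [sin_sq]; ring

lemma tcD_sin (p q θ : ℝ) : p - tcD p q θ = (p - q) * sin θ ^ 2 := by
  unfold tcD; rw [sin_sq]; ring

lemma tcD_deriv (p q θ : ℝ) : HasDerivAt (tcD p q) (-2 * (p - q) * (sin θ * cos θ)) θ := by
  unfold tcD
  have h1 := (((hasDerivAt_cos θ).pow 2).const_mul p).add (((hasDerivAt_sin θ).pow 2).const_mul q)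
  refine h1.congr_deriv ?_
  push_cast; ring

lemma tc_int1 {p q : ℝ} (hp : 0 < p) (hq : 0 < q) :
    Continuous (fun θ => (√(tcD p q θ))⁻¹) :=
  ((tcD_cont p q).sqrt).inv₀ fun θ => (sqrt_pos.2 (tcD_pos hp hq θ)).ne'

lemma tc_int2 (p q : ℝ) : Continuous (fun θ => √(tcD p q θ)) := (tcD_cont p q).sqrt

lemma tc_int3 (p q : ℝ) : Continuous (fun θ => tcD p q θ * √(tcD p q θ)) :=
  (tcD_cont p q).mul (tcD_cont p q).sqrt

lemma tc_int4 {p q : ℝ} (hp : 0 < p) (hq : 0 < q) :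
    Continuous (fun θ => (tcD p q θ * √(tcD p q θ))⁻¹) :=
  (tc_int3 p q).inv₀ fun θ => (mul_pos (tcD_pos hp hq θ) (sqrt_pos.2 (tcD_pos hp hq θ))).ne'

/-- `∫ (D² - pq) / D^{3/2} = 0` -/
lemma tc_HL {p q : ℝ} (hp : 0 < p) (hq : 0 < q) (hpq : p ≠ q) : tcH p q = p * q * tcL p q := by
  have hd : ∀ θ ∈ Set.uIcc (0:ℝ) (π/2), HasDerivAt (fun θ => (p - q) * (sin θ * cos θ * (√(tcD p q θ))⁻¹))
      (√(tcD p q θ) - p * q * (tcD p q θ * √(tcD p q θ))⁻¹) θ := by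
    intro θ _
    have hD := tcD_pos hp hq θ
    have hS := sqrt_pos.2 hD
    have h := (((hasDerivAt_sin θ).mul (hasDerivAt_cos θ)).mul
      (((tcD_deriv p q θ).sqrt hD.ne').inv hS.ne')).const_mul (p - q)
    refine h.congr_deriv ?_
    have e := sq_sqrt hD.le
    have e1 := tcD_cos p q θ
    have e2 := tcD_sin p q θ
    try simp only [Pi.mul_apply, Pi.inv_apply]
    set S := √(tcD p q θ)
    rw [← e] at e1 e2 ⊢
    field_simp
    linear_combination -p * e1 - (- S^2 + (p-q) * cos θ^2) * e2
  have h := intervalIntegral.integral_eq_sub_of_hasDerivAt hd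
    (((tc_int2 p q).sub ((tc_int4 hp hq).const_mul (p*q))).intervalIntegrable _ _)
  rw [intervalIntegral.integral_sub ((tc_int2 p q).intervalIntegrable _ _)
    (((tc_int4 hp hq).const_mul (p*q)).intervalIntegrable _ _),
    intervalIntegral.integral_const_mul] at h
  simp only [sin_pi_div_two, cos_pi_div_two, sin_zero, cos_zero, mul_zero, zero_mul, sub_zero] at h
  unfold tcH tcL
  linarith

lemma tc_M {p q : ℝ} (hp : 0 < p) (hq : 0 < q) (hpq : p ≠ q) :
    3 * tcM p q = 2 * (p + q) * tcH p q - p * q * tcG p q := by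
  have hd : ∀ θ ∈ Set.uIcc (0:ℝ) (π/2), HasDerivAt (fun θ => (p - q) * (sin θ * cos θ * √(tcD p q θ)))
      (3 * (tcD p q θ * √(tcD p q θ)) - 2 * (p + q) * √(tcD p q θ) + p * q * (√(tcD p q θ))⁻¹) θ := by
    intro θ _
    have hD := tcD_pos hp hq θ
    have hS := sqrt_pos.2 hD
    have h := (((hasDerivAt_sin θ).mul (hasDerivAt_cos θ)).mul
      ((tcD_deriv p q θ).sqrt hD.ne')).const_mul (p - q)
    refine h.congr_deriv ?_
    have e := sq_sqrt hD.le
    have e1 := tcD_cos p q θ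
    have e2 := tcD_sin p q θ
    try simp only [Pi.mul_apply]
    set S := √(tcD p q θ)
    rw [← e] at e1 e2 ⊢
    field_simp
    linear_combination -(S^2 - (p - S^2)) * e1 - (- S^2 - (p-q) * cos θ^2) * e2
  have h := intervalIntegral.integral_eq_sub_of_hasDerivAt hd
    (((((tc_int3 p q).const_mul 3).sub ((tc_int2 p q).const_mul (2 * (p+q)))).add
      ((tc_int1 hp hq).const_mul (p*q))).intervalIntegrable _ _)
  rw [intervalIntegral.integral_add (f := fun θ => 3 * (tcD p q θ * √(tcD p q θ)) - 2 * (p + q) * √(tcD p q θ))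
    ((((tc_int3 p q).const_mul 3).sub ((tc_int2 p q).const_mul (2 * (p+q)))).intervalIntegrable _ _)
      (((tc_int1 hp hq).const_mul (p*q)).intervalIntegrable _ _),
    intervalIntegral.integral_sub (((tc_int3 p q).const_mul 3).intervalIntegrable _ _)
      (((tc_int2 p q).const_mul (2 * (p+q))).intervalIntegrable _ _),
    intervalIntegral.integral_const_mul, intervalIntegral.integral_const_mul,
    intervalIntegral.integral_const_mul] at h
  simp at h
  unfold tcH tcM tcG
  linarith

lemma tc_dH {p q : ℝ} (hp : 0 < p) (hq : 0 < q) (hpq : p ≠ q) :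
    HasDerivAt (tcH p) ((p * tcG p q - tcH p q) / (2 * (p - q))) q := by
  have hpq' : p - q ≠ 0 := sub_ne_zero.2 hpq
  have hm : 0 < min p (q/2) := lt_min hp (by linarith)
  have key := intervalIntegral.hasDerivAt_integral_of_dominated_loc_of_deriv_le
    (μ := MeasureTheory.volume) (a := 0) (b := π/2)
    (F := fun q θ => √(tcD p q θ)) (F' := fun q θ => sin θ ^ 2 / (2 * √(tcD p q θ)))
    (x₀ := q) (s := Set.Ioi (q/2)) (bound := fun _ => 1 / (2 * √(min p (q/2))))
    (Ioi_mem_nhds (by linarith))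
    (Filter.Eventually.of_forall fun x => (tc_int2 p x).aestronglyMeasurable)
    ((tc_int2 p q).intervalIntegrable _ _)
    (Continuous.aestronglyMeasurable (by
      have := tc_int1 hp hq
      have h2 : Continuous fun θ => sin θ ^ 2 * (2⁻¹ * (√(tcD p q θ))⁻¹) := by fun_prop
      convert h2 using 2
      rw [div_eq_mul_inv, mul_inv]))
    (Filter.Eventually.of_forall fun θ _ x hx => by
      have hx : q / 2 < x := hx
      have hD := tcD_ge (min_le_left p (q/2)) ((min_le_right p (q/2)).trans hx.le) θ
      have := sqrt_pos.2 hm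
      rw [norm_of_nonneg (by positivity)]
      gcongr
      exact sin_sq_le_one θ)
    (intervalIntegrable_const)
    (Filter.Eventually.of_forall fun θ _ x hx => by
      have hx : q / 2 < x := hx
      have hD := tcD_pos hp (by linarith : 0 < x) θ
      have h : HasDerivAt (fun x => tcD p x θ) (sin θ ^ 2) x := by
        unfold tcD
        simpa using ((hasDerivAt_id x).mul_const (sin θ ^ 2)).const_add (p * cos θ ^ 2)
      exact h.sqrt hD.ne')
  refine key.2.congr_deriv ?_
  have : ∀ θ, sin θ ^ 2 / (2 * √(tcD p q θ)) =
      (1 / (2 * (p - q))) * (p * (√(tcD p q θ))⁻¹ - √(tcD p q θ)) := by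
    intro θ
    have hD := tcD_pos hp hq θ
    have hS := sqrt_pos.2 hD
    have e := sq_sqrt hD.le
    have e2 := tcD_sin p q θ
    field_simp
    rw [e]; linarith
  simp only [this]
  rw [intervalIntegral.integral_const_mul, intervalIntegral.integral_sub
    (((tc_int1 hp hq).const_mul p).intervalIntegrable _ _) ((tc_int2 p q).intervalIntegrable _ _),
    intervalIntegral.integral_const_mul]
  unfold tcG tcH; ring

lemma tc_dG0 {p q : ℝ} (hp : 0 < p) (hq : 0 < q) :
    HasDerivAt (tcG p) (∫ θ in (0:ℝ)..(π/2), -(sin θ ^ 2 / (2 * (tcD p q θ * √(tcD p q θ))))) q := by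
  have hm : 0 < min p (q/2) := lt_min hp (by linarith)
  have key := intervalIntegral.hasDerivAt_integral_of_dominated_loc_of_deriv_le
    (μ := MeasureTheory.volume) (a := 0) (b := π/2)
    (F := fun q θ => (√(tcD p q θ))⁻¹) 
    (F' := fun q θ => -(sin θ ^ 2 / (2 * (tcD p q θ * √(tcD p q θ)))))
    (x₀ := q) (s := Set.Ioi (q/2)) (bound := fun _ => 1 / (2 * (min p (q/2) * √(min p (q/2)))))
    (Ioi_mem_nhds (by linarith))
    (by
      filter_upwards [Ioi_mem_nhds hq] with x hx
      exact (tc_int1 hp hx).aestronglyMeasurable)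
    ((tc_int1 hp hq).intervalIntegrable _ _)
    (Continuous.aestronglyMeasurable (by
      have := tc_int4 hp hq
      have h2 : Continuous fun θ => -(sin θ ^ 2 * (2⁻¹ * (tcD p q θ * √(tcD p q θ))⁻¹)) := by fun_prop
      convert h2 using 3
      rw [div_eq_mul_inv, mul_inv]))
    (Filter.Eventually.of_forall fun θ _ x hx => by
      have hx : q / 2 < x := hx
      have hD := tcD_ge (min_le_left p (q/2)) ((min_le_right p (q/2)).trans hx.le) θ
      have := sqrt_pos.2 hm
      have hD0 := tcD_pos hp (by linarith : 0 < x) θ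
      rw [norm_neg, norm_of_nonneg (by positivity)]
      gcongr
      exact sin_sq_le_one θ)
    (intervalIntegrable_const)
    (Filter.Eventually.of_forall fun θ _ x hx => by
      have hx : q / 2 < x := hx
      have hD := tcD_pos hp (by linarith : 0 < x) θ
      have hS := sqrt_pos.2 hD
      have h : HasDerivAt (fun x => tcD p x θ) (sin θ ^ 2) x := by
        unfold tcD
        simpa using ((hasDerivAt_id x).mul_const (sin θ ^ 2)).const_add (p * cos θ ^ 2)
      refine ((h.sqrt hD.ne').inv hS.ne').congr_deriv ?_
      rw [sq_sqrt hD.le]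
      field_simp)
  exact key.2

lemma tc_dG {p q : ℝ} (hp : 0 < p) (hq : 0 < q) (hpq : p ≠ q) :
    HasDerivAt (tcG p) (-(tcH p q - q * tcG p q) / (2 * q * (p - q))) q := by
  have hpq' : p - q ≠ 0 := sub_ne_zero.2 hpq
  refine (tc_dG0 hp hq).congr_deriv ?_
  have : ∀ θ, -(sin θ ^ 2 / (2 * (tcD p q θ * √(tcD p q θ)))) =
      (1 / (2 * (p - q))) * ((√(tcD p q θ))⁻¹ - p * (tcD p q θ * √(tcD p q θ))⁻¹) := by
    intro θ
    have hD := tcD_pos hp hq θ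
    have hS := sqrt_pos.2 hD
    have e2 := tcD_sin p q θ
    field_simp
    linarith
  simp only [this]
  rw [intervalIntegral.integral_const_mul, intervalIntegral.integral_sub
    ((tc_int1 hp hq).intervalIntegrable _ _) (((tc_int4 hp hq).const_mul p).intervalIntegrable _ _),
    intervalIntegral.integral_const_mul]
  rw [tc_HL hp hq hpq]
  unfold tcG tcL
  field_simp
  ring

noncomputable def tcJ (p q : ℝ) : ℝ := tcH p q - q * tcG p q

lemma tc_dJ {p q : ℝ} (hp : 0 < p) (hq : 0 < q) (hpq : p ≠ q) :
    HasDerivAt (tcJ p) (-(tcG p q) / 2) q := by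
  have hpq' : p - q ≠ 0 := sub_ne_zero.2 hpq
  have h := (tc_dH hp hq hpq).sub ((hasDerivAt_id q).mul (tc_dG hp hq hpq))
  refine h.congr_deriv ?_
  simp only [id]
  field_simp
  ring

lemma tc_qG {p q : ℝ} (hq : 0 < q) (hqp : q ≤ p) : 0 ≤ q * tcG p q ∧ q * tcG p q ≤ √q * (π / 2) := by
  have hp := hq.trans_le hqp
  have hs := sqrt_pos.2 hq
  constructor
  · refine mul_nonneg hq.le (intervalIntegral.integral_nonneg (by positivity) fun θ _ => by positivity)
  · have : tcG p q ≤ ∫ θ in (0:ℝ)..(π/2), (√q)⁻¹ := by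
      refine intervalIntegral.integral_mono_on (by positivity) ((tc_int1 hp hq).intervalIntegrable _ _)
        intervalIntegrable_const fun θ _ => ?_
      gcongr
      exact tcD_ge hqp le_rfl θ
    simp at this
    calc q * tcG p q ≤ q * (π / 2 * (√q)⁻¹) := by gcongr
      _ = _ := by
        nth_rw 1 [← sq_sqrt hq.le]
        field_simp

lemma tcG_self {p : ℝ} (hp : 0 < p) : tcG p p = π / 2 * (√p)⁻¹ := by
  have : ∀ θ, tcD p p θ = p := fun θ => by have := tcD_cos p p θ; simp at this; linarith
  simp [tcG, this]

lemma tcH_zero {p : ℝ} (hp : 0 < p) : tcH p 0 = √p := by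
  unfold tcH
  have : Set.EqOn (fun θ => √(tcD p 0 θ)) (fun θ => √p * cos θ) (Set.uIcc 0 (π/2)) := by
    intro θ hθ
    rw [Set.uIcc_of_le (by positivity)] at hθ
    have hc : 0 ≤ cos θ := cos_nonneg_of_mem_Icc ⟨by linarith [hθ.1, pi_pos], hθ.2⟩
    simp [tcD, sqrt_mul hp.le, sqrt_sq hc]
  rw [intervalIntegral.integral_congr this]
  simp

lemma tcH_cont (p : ℝ) : Continuous (tcH p) := by
  unfold tcH
  refine intervalIntegral.continuous_parametric_intervalIntegral_of_continuous' ?_ _ _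
  unfold Function.uncurry tcD
  fun_prop

lemma tcJ_bd {p q : ℝ} (hq : 0 < q) (hqp : q ≤ p) : |tcJ p q| ≤ (p - q) * ((√q)⁻¹ * (π/2)) := by
  have hp := hq.trans_le hqp
  have hs := sqrt_pos.2 hq
  have e : tcJ p q = ∫ θ in (0:ℝ)..(π/2), (p - q) * cos θ ^ 2 * (√(tcD p q θ))⁻¹ := by
    unfold tcJ tcH tcG
    rw [← intervalIntegral.integral_const_mul, ← intervalIntegral.integral_sub
      ((tc_int2 p q).intervalIntegrable _ _) (((tc_int1 hp hq).const_mul q).intervalIntegrable _ _)]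
    congr 1; ext θ
    have hD := tcD_pos hp hq θ
    have hS := sqrt_pos.2 hD
    have e2 := tcD_cos p q θ
    have e := sq_sqrt hD.le
    field_simp
    rw [e, e2]
  rw [e]
  have := intervalIntegral.norm_integral_le_of_norm_le_const (a := 0) (b := π/2)
    (f := fun θ => (p - q) * cos θ ^ 2 * (√(tcD p q θ))⁻¹) (C := (p-q) * (√q)⁻¹) (by
      intro θ _
      have h1 : 0 ≤ p - q := by linarith
      have := tcD_ge hqp le_rfl θ
      rw [norm_of_nonneg (by positivity)]
      calc (p - q) * cos θ ^ 2 * (√(tcD p q θ))⁻¹ ≤ (p-q) * 1 * (√q)⁻¹ := by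
            gcongr
            exact cos_sq_le_one θ
        _ = _ := by ring)
  rw [norm_eq_abs, sub_zero, abs_of_pos (by positivity : 0 < π/2)] at this
  linarith

open Filter Topology in
/-- Legendre relation -/
lemma tc_legendre {p w : ℝ} (hw : w ∈ Set.Ioo 0 p) :
    tcJ p w * tcG p (p - w) + tcJ p (p - w) * tcG p w = π / 2 := by
  have hp : 0 < p := hw.1.trans hw.2
  set W : ℝ → ℝ := fun w => tcJ p w * tcG p (p - w) + tcJ p (p - w) * tcG p w with hW
  have hd : ∀ x ∈ Set.Ioo 0 p, HasDerivAt W 0 x := by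
    intro x hx
    have hx0 : 0 < x := hx.1
    have hx1 : 0 < p - x := sub_pos.2 hx.2
    have hne : p ≠ x := by linarith
    have hne' : p ≠ p - x := by linarith
    have hs : HasDerivAt (fun x => p - x) (-1) x := by simpa using (hasDerivAt_id x).const_sub p
    have h := ((tc_dJ hp hx0 hne).mul ((tc_dG hp hx1 hne').comp x hs)).add
      (((tc_dJ hp hx1 hne').comp x hs).mul (tc_dG hp hx0 hne))
    refine h.congr_deriv ?_
    simp only [Function.comp, tcJ, sub_sub_cancel]
    field_simp
    ring
  have hconst : ∀ x ∈ Set.Ioo 0 p, W x = W w := fun x hx =>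
    isOpen_Ioo.is_const_of_deriv_eq_zero isPreconnected_Ioo
      (fun y hy => (hd y hy).differentiableAt.differentiableWithinAt)
      (fun y hy => (hd y hy).deriv) hx hw
  have hmem : Set.Ioo 0 p ∈ 𝓝[>] (0:ℝ) := Ioo_mem_nhdsGT hp
  have hlim1 : Tendsto W (𝓝[>] 0) (𝓝 (W w)) :=
    tendsto_const_nhds.congr' (by filter_upwards [hmem] with x hx using (hconst x hx).symm)
  have hid : Tendsto (fun x : ℝ => x) (𝓝[>] 0) (𝓝 0) := tendsto_nhdsWithin_of_tendsto_nhds tendsto_id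
  have hsq : Tendsto (fun x : ℝ => √x * (π/2)) (𝓝[>] 0) (𝓝 0) := by
    have : Continuous fun x : ℝ => √x * (π/2) := by fun_prop
    simpa [Function.comp_def] using (this.tendsto 0).comp hid
  have hqG : Tendsto (fun x => x * tcG p x) (𝓝[>] 0) (𝓝 0) := by
    refine tendsto_of_tendsto_of_tendsto_of_le_of_le' tendsto_const_nhds hsq ?_ ?_
    · filter_upwards [hmem] with x hx using (tc_qG hx.1 hx.2.le).1
    · filter_upwards [hmem] with x hx using (tc_qG hx.1 hx.2.le).2
  have hpx : Tendsto (fun x : ℝ => p - x) (𝓝[>] 0) (𝓝 p) := by simpa using hid.const_sub p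
  have hJ : Tendsto (tcJ p) (𝓝[>] 0) (𝓝 (√p)) := by
    have := (((tcH_cont p).tendsto 0).comp hid).sub hqG
    rw [tcH_zero hp, sub_zero] at this
    exact this
  have hG : Tendsto (fun x => tcG p (p - x)) (𝓝[>] 0) (𝓝 (π / 2 * (√p)⁻¹)) := by
    have := (tc_dG0 hp hp).continuousAt.tendsto.comp hpx
    rwa [tcG_self hp] at this
  have hsp := sqrt_pos.2 hp
  have hJG : Tendsto (fun x => tcJ p (p - x) * tcG p x) (𝓝[>] 0) (𝓝 0) := by
    have hb : Tendsto (fun x => ((√(p - x))⁻¹ * (π/2)) * (x * tcG p x)) (𝓝[>] 0) (𝓝 0) := by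
      have h1 : Tendsto (fun x => (√(p - x))⁻¹ * (π/2)) (𝓝[>] 0) (𝓝 ((√p)⁻¹ * (π/2))) :=
        (((continuous_sqrt.tendsto p).comp hpx).inv₀ hsp.ne').mul_const _
      simpa using h1.mul hqG
    refine squeeze_zero_norm' ?_ hb
    filter_upwards [hmem] with x hx
    have h1 := tcJ_bd (sub_pos.2 hx.2) (by linarith [hx.1] : p - x ≤ p)
    have h2 : 0 ≤ tcG p x := nonneg_of_mul_nonneg_right (tc_qG hx.1 hx.2.le).1 hx.1
    rw [norm_mul, norm_eq_abs, norm_of_nonneg h2]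
    calc _ ≤ ((p - (p - x)) * ((√(p-x))⁻¹ * (π/2))) * tcG p x := by gcongr
      _ = _ := by ring
  have hlim2 := (hJ.mul hG).add hJG
  have := tendsto_nhds_unique hlim1 hlim2
  show W w = _
  rw [this]
  field_simp
  ring

lemma tc_sub_mono {f f' g k : ℝ → ℝ} {α β : ℝ} (h : α ≤ β) (hc : ContinuousOn f (Set.Icc α β))
    (hm : StrictMonoOn f (Set.Icc α β)) (hd : ∀ x ∈ Set.Ioo α β, HasDerivAt f (f' x) x)
    (hk : ∀ x ∈ Set.Ioo α β, f' x * g (f x) = k x) :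
    ∫ x in (f α)..(f β), g x = ∫ x in α..β, k x := by
  have hle : f α ≤ f β := hm.monotoneOn (Set.left_mem_Icc.2 h) (Set.right_mem_Icc.2 h) h
  have him : f '' Set.Ioo α β = Set.Ioo (f α) (f β) := by
    refine Set.Subset.antisymm ?_ (intermediate_value_Ioo h hc)
    rintro _ ⟨x, hx, rfl⟩
    have hx' := Set.Ioo_subset_Icc_self hx
    exact ⟨hm (Set.left_mem_Icc.2 h) hx' hx.1, hm hx' (Set.right_mem_Icc.2 h) hx.2⟩
  rw [intervalIntegral.integral_of_le h, intervalIntegral.integral_of_le hle,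
    MeasureTheory.integral_Ioc_eq_integral_Ioo, MeasureTheory.integral_Ioc_eq_integral_Ioo, ← him,
    MeasureTheory.integral_image_eq_integral_deriv_smul_of_monotoneOn measurableSet_Ioo
      (fun x hx => (hd x hx).hasDerivWithinAt) (hm.monotoneOn.mono Set.Ioo_subset_Icc_self)]
  exact MeasureTheory.setIntegral_congr_fun measurableSet_Ioo fun x hx => by
    simpa using hk x hx

lemma tc_sub_anti {f f' g k : ℝ → ℝ} {α β : ℝ} (h : α ≤ β) (hc : ContinuousOn f (Set.Icc α β))
    (hm : StrictAntiOn f (Set.Icc α β)) (hd : ∀ x ∈ Set.Ioo α β, HasDerivAt f (f' x) x)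
    (hk : ∀ x ∈ Set.Ioo α β, -f' x * g (f x) = k x) :
    ∫ x in (f β)..(f α), g x = ∫ x in α..β, k x := by
  have hle : f β ≤ f α := hm.antitoneOn (Set.left_mem_Icc.2 h) (Set.right_mem_Icc.2 h) h
  have him : f '' Set.Ioo α β = Set.Ioo (f β) (f α) := by
    refine Set.Subset.antisymm ?_ (intermediate_value_Ioo' h hc)
    rintro _ ⟨x, hx, rfl⟩
    have hx' := Set.Ioo_subset_Icc_self hx
    exact ⟨hm hx' (Set.right_mem_Icc.2 h) hx.2, hm (Set.left_mem_Icc.2 h) hx' hx.1⟩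
  rw [intervalIntegral.integral_of_le h, intervalIntegral.integral_of_le hle,
    MeasureTheory.integral_Ioc_eq_integral_Ioo, MeasureTheory.integral_Ioc_eq_integral_Ioo, ← him,
    MeasureTheory.integral_image_eq_integral_deriv_smul_of_antitoneOn measurableSet_Ioo
      (fun x hx => (hd x hx).hasDerivWithinAt) (hm.antitoneOn.mono Set.Ioo_subset_Icc_self)]
  exact MeasureTheory.setIntegral_congr_fun measurableSet_Ioo fun x hx => by
    simpa using hk x hx

lemma tc_sub_sin {a : ℝ} (ha : 0 < a) {g k : ℝ → ℝ} {α β : ℝ} (hα : -(π/2) ≤ α) (h : α ≤ β)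
    (hβ : β ≤ π/2)
    (hk : ∀ x ∈ Set.Ioo α β, a * cos x * g (a * sin x) = k x) :
    ∫ x in (a * sin α)..(a * sin β), g x = ∫ x in α..β, k x := by
  refine tc_sub_mono (f := fun x => a * sin x) h (by fun_prop) ?_
    (fun x _ => (hasDerivAt_sin x).const_mul a) hk
  intro x hx y hy hxy
  have := strictMonoOn_sin ⟨hα.trans hx.1, hx.2.trans hβ⟩ ⟨hα.trans hy.1, hy.2.trans hβ⟩ hxy
  exact mul_lt_mul_of_pos_left this ha

lemma tcD_q (c a θ : ℝ) : c ^ 2 - (a * sin θ) ^ 2 = tcD (c ^ 2) (c ^ 2 - a ^ 2) θ := by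
  have := tcD_sin (c^2) (c^2 - a^2) θ
  linear_combination this

lemma tc_asin (a θ : ℝ) : a ^ 2 - (a * sin θ) ^ 2 = (a * cos θ) ^ 2 := by
  rw [mul_pow, mul_pow, cos_sq']; ring

lemma tc_K {c a : ℝ} (ha : 0 < a) (hac : a < c) :
    ∫ t in (0:ℝ)..1, (√((1 - t ^ 2) * (1 - (a / c) ^ 2 * t ^ 2)))⁻¹
      = c * tcG (c ^ 2) (c ^ 2 - a ^ 2) := by
  have hc : 0 < c := ha.trans hac
  have h := tc_sub_sin one_pos (g := fun t => (√((1 - t ^ 2) * (1 - (a / c) ^ 2 * t ^ 2)))⁻¹)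
    (k := fun θ => c * (√(tcD (c ^ 2) (c ^ 2 - a ^ 2) θ))⁻¹) (α := 0) (β := π/2)
    (by linarith [pi_pos]) (by positivity) le_rfl (by
      intro θ hθ
      have hcos : 0 < cos θ := cos_pos_of_mem_Ioo ⟨by linarith [hθ.1, pi_pos], hθ.2⟩
      have e1 : 1 - (1 * sin θ) ^ 2 = cos θ ^ 2 := by rw [cos_sq']; ring
      have hD := tcD_pos (pow_pos hc 2) (by nlinarith : 0 < c ^ 2 - a ^ 2) θ
      have e2 : tcD (c ^ 2) (c ^ 2 - a ^ 2) θ = c ^ 2 * (1 - (a / c) ^ 2 * (1 * sin θ) ^ 2) := by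
        rw [← tcD_q]; field_simp
      simp only [e1]
      rw [e2, sqrt_mul (sq_nonneg _), sqrt_sq hcos.le, sqrt_mul (sq_nonneg _), sqrt_sq hc.le,
        mul_inv, mul_inv]
      field_simp)
  simp only [sin_zero, mul_zero, sin_pi_div_two, mul_one] at h
  rw [h, intervalIntegral.integral_const_mul]; rfl

lemma tc_Gam {c a : ℝ} (ha : 0 < a) (hac : a < c) :
    ∫ s in (-a)..a, (√((c ^ 2 - s ^ 2) * (a ^ 2 - s ^ 2)))⁻¹
      = 2 * tcG (c ^ 2) (c ^ 2 - a ^ 2) := by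
  have hc : 0 < c := ha.trans hac
  have hp := pow_pos hc 2
  have hq : 0 < c ^ 2 - a ^ 2 := by nlinarith
  have h := tc_sub_sin ha (g := fun s => (√((c ^ 2 - s ^ 2) * (a ^ 2 - s ^ 2)))⁻¹)
    (k := fun θ => (√(tcD (c ^ 2) (c ^ 2 - a ^ 2) θ))⁻¹) (α := -(π/2)) (β := π/2)
    le_rfl (by linarith [pi_pos]) le_rfl (by
      intro θ hθ
      have hcos : 0 < cos θ := cos_pos_of_mem_Ioo hθ
      have hD := tcD_pos hp hq θ
      simp only [tc_asin, tcD_q]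
      rw [sqrt_mul hD.le, sqrt_sq (by positivity), mul_inv]
      field_simp)
  simp only [sin_neg, sin_pi_div_two, mul_neg, mul_one] at h
  have hi := tc_int1 hp hq
  rw [h, ← intervalIntegral.integral_add_adjacent_intervals (b := 0) (hi.intervalIntegrable _ _)
    (hi.intervalIntegrable _ _)]
  have h2 := intervalIntegral.integral_comp_neg (a := 0) (b := π/2)
    (fun θ => (√(tcD (c ^ 2) (c ^ 2 - a ^ 2) θ))⁻¹)
  have e : ∀ θ, tcD (c ^ 2) (c ^ 2 - a ^ 2) (-θ) = tcD (c ^ 2) (c ^ 2 - a ^ 2) θ := by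
    intro θ; simp [tcD]
  simp only [e, neg_zero] at h2
  rw [← h2]
  unfold tcG; ring

/-- integral of a combination -/
lemma tc_comb {p q : ℝ} (hp : 0 < p) (hq : 0 < q) (hpq : p ≠ q) (x y z : ℝ) :
    ∫ θ in (0:ℝ)..(π/2), (x * (tcD p q θ * √(tcD p q θ)) + y * √(tcD p q θ) + z * (√(tcD p q θ))⁻¹)
      = x * ((2 * (p + q) * tcH p q - p * q * tcG p q) / 3) + y * tcH p q + z * tcG p q := by
  rw [intervalIntegral.integral_add
    (f := fun θ => x * (tcD p q θ * √(tcD p q θ)) + y * √(tcD p q θ))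
    ((((tc_int3 p q).const_mul x).add ((tc_int2 p q).const_mul y)).intervalIntegrable _ _)
      (((tc_int1 hp hq).const_mul z).intervalIntegrable _ _),
    intervalIntegral.integral_add (((tc_int3 p q).const_mul x).intervalIntegrable _ _)
      (((tc_int2 p q).const_mul y).intervalIntegrable _ _),
    intervalIntegral.integral_const_mul, intervalIntegral.integral_const_mul,
    intervalIntegral.integral_const_mul, ← tc_M hp hq hpq]
  unfold tcM tcG tcH; ring

lemma tc_N {c a : ℝ} (ha : 0 < a) (hac : a < c) (ξ : ℝ) :
    ∫ s in (0:ℝ)..a, (ξ + (c ^ 2 - a ^ 2) / 2 - s ^ 2) * √((a ^ 2 - s ^ 2) / (c ^ 2 - s ^ 2))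
      = (ξ - c ^ 2 / 6 - a ^ 2 / 6) * tcJ (c ^ 2) (c ^ 2 - a ^ 2)
        + a ^ 2 * (c ^ 2 - a ^ 2) / 3 * tcG (c ^ 2) (c ^ 2 - a ^ 2) := by
  have hc : 0 < c := ha.trans hac
  have hp := pow_pos hc 2
  have hq : 0 < c ^ 2 - a ^ 2 := by nlinarith
  have hpq : c ^ 2 ≠ c ^ 2 - a ^ 2 := by nlinarith
  set η := ξ + (c ^ 2 - a ^ 2) / 2 with hη
  set p := c ^ 2 with hpd
  set q := p - a ^ 2 with hqd
  have h := tc_sub_sin ha (g := fun s => (η - s ^ 2) * √((a ^ 2 - s ^ 2) / (p - s ^ 2)))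
    (k := fun θ => 1 * (tcD p q θ * √(tcD p q θ)) + (η - p - q) * √(tcD p q θ)
      + (-(q * (η - p))) * (√(tcD p q θ))⁻¹) (α := 0) (β := π/2)
    (by linarith [pi_pos]) (by positivity) le_rfl (by
      intro θ hθ
      have hcos : 0 < cos θ := cos_pos_of_mem_Ioo ⟨by linarith [hθ.1, pi_pos], hθ.2⟩
      have hD := tcD_pos hp hq θ
      have hS := sqrt_pos.2 hD
      have e := sq_sqrt hD.le
      have e1 : p - (a * sin θ) ^ 2 = tcD p q θ := tcD_q c a θ
      have e2 : (a * sin θ) ^ 2 = p - tcD p q θ := by linarith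
      have e3 : (a * cos θ) ^ 2 = tcD p q θ - q := by rw [← tc_asin, e2]; ring
      simp only [tc_asin, e1]
      rw [sqrt_div (sq_nonneg _), sqrt_sq (by positivity), e2]
      set S := √(tcD p q θ)
      rw [← e] at e3 ⊢
      field_simp
      linear_combination (η - p + S ^ 2) * e3)
  simp only [sin_zero, mul_zero, sin_pi_div_two, mul_one] at h
  rw [h, tc_comb hp hq hpq]
  unfold tcJ
  have : a ^ 2 = p - q := by rw [hqd]; ring
  rw [hη, this]; ring

lemma tc_B {c a : ℝ} (ha : 0 < a) (hac : a < c) (ξ : ℝ) :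
    ∫ s in a..c, (ξ + (c ^ 2 - a ^ 2) / 2 - s ^ 2) * √((s ^ 2 - a ^ 2) / (c ^ 2 - s ^ 2))
      = (ξ - c ^ 2 / 6 - a ^ 2 / 6) * tcJ (c ^ 2) (a ^ 2)
        - a ^ 2 * (c ^ 2 - a ^ 2) / 3 * tcG (c ^ 2) (a ^ 2) := by
  have hc : 0 < c := ha.trans hac
  have hp := pow_pos hc 2
  have hq := pow_pos ha 2
  have hpq0 : 0 < c ^ 2 - a ^ 2 := by nlinarith
  have hpq : c ^ 2 ≠ a ^ 2 := by linarith
  have hfa : √(tcD (c ^ 2) (a ^ 2) (π/2)) = a := by simp [tcD, sqrt_sq ha.le]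
  have hfc : √(tcD (c ^ 2) (a ^ 2) 0) = c := by simp [tcD, sqrt_sq hc.le]
  set η := ξ + (c ^ 2 - a ^ 2) / 2 with hη
  have h := tc_sub_anti (f := fun θ => √(tcD (c ^ 2) (a ^ 2) θ))
    (f' := fun θ => -2 * (c ^ 2 - a ^ 2) * (sin θ * cos θ) / (2 * √(tcD (c ^ 2) (a ^ 2) θ)))
    (g := fun s => (η - s ^ 2) * √((s ^ 2 - a ^ 2) / (c ^ 2 - s ^ 2)))
    (k := fun θ => (-1) * (tcD (c ^ 2) (a ^ 2) θ * √(tcD (c ^ 2) (a ^ 2) θ))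
      + (η + a ^ 2) * √(tcD (c ^ 2) (a ^ 2) θ)
      + (-(a ^ 2 * η)) * (√(tcD (c ^ 2) (a ^ 2) θ))⁻¹) (α := 0) (β := π/2)
    (by positivity) (tc_int2 _ _).continuousOn
    (by
      intro x hx y hy hxy
      have h1 : sin x < sin y := strictMonoOn_sin ⟨by linarith [hx.1, pi_pos], hx.2⟩
        ⟨by linarith [hy.1, pi_pos], hy.2⟩ hxy
      have h0 : 0 ≤ sin x := sin_nonneg_of_nonneg_of_le_pi hx.1 (by linarith [hx.2, pi_pos])
      have h2 : sin x ^ 2 < sin y ^ 2 := pow_lt_pow_left₀ h1 h0 two_ne_zero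
      refine sqrt_lt_sqrt (tcD_pos hp hq y).le ?_
      have ex := tcD_sin (c ^ 2) (a ^ 2) x
      have ey := tcD_sin (c ^ 2) (a ^ 2) y
      have := mul_lt_mul_of_pos_left h2 hpq0
      linarith)
    (fun θ _ => (tcD_deriv _ _ θ).sqrt (tcD_pos hp hq θ).ne')
    (by
      intro θ hθ
      have hcos : 0 < cos θ := cos_pos_of_mem_Ioo ⟨by linarith [hθ.1, pi_pos], hθ.2⟩
      have hsin : 0 < sin θ := sin_pos_of_pos_of_lt_pi hθ.1 (by linarith [hθ.2, pi_pos])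
      have hD := tcD_pos hp hq θ
      have hS := sqrt_pos.2 hD
      have e := sq_sqrt hD.le
      have e1 := tcD_cos (c ^ 2) (a ^ 2) θ
      have e2 := tcD_sin (c ^ 2) (a ^ 2) θ
      have e3 : √((c ^ 2 - a ^ 2) * cos θ ^ 2 / ((c ^ 2 - a ^ 2) * sin θ ^ 2)) = cos θ / sin θ := by
        rw [mul_div_mul_left _ _ hpq0.ne', ← div_pow, sqrt_sq (by positivity)]
      simp only [e, e1, e2, e3]
      set S := √(tcD (c ^ 2) (a ^ 2) θ)
      rw [← e] at e1 ⊢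
      field_simp
      linear_combination -(η - S ^ 2) * e1)
  simp only [hfa, hfc] at h
  rw [h, tc_comb hp hq hpq]
  unfold tcJ
  rw [hη]; ring

lemma tcG_pos {p q : ℝ} (hp : 0 < p) (hq : 0 < q) : 0 < tcG p q :=
  intervalIntegral.intervalIntegral_pos_of_pos ((tc_int1 hp hq).intervalIntegrable _ _)
    (fun θ => inv_pos.2 (sqrt_pos.2 (tcD_pos hp hq θ))) (by positivity)

end


/-- identity (3.1) of Lemma 3.2: `(Γ(ξ)/(6π))·B′(ξ) = −c²/(2K(m(ξ))²)`,
where `B` is the phase (1.9), `Γ` the constant (1.10) and `m(ξ) = a(ξ)/c`. -/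
theorem theta_coefficient_identity (c : ℝ) (hc : 0 < c) (a : ℝ → ℝ)
    (hrange : ∀ ξ ∈ Set.Ioo (-c ^ 2 / 2) (c ^ 2 / 3), 0 < a ξ ∧ a ξ < c)
    (hdiff : ∀ ξ ∈ Set.Ioo (-c ^ 2 / 2) (c ^ 2 / 3), DifferentiableAt ℝ a ξ)
    (hnorm : ∀ ξ ∈ Set.Ioo (-c ^ 2 / 2) (c ^ 2 / 3),
      ∫ s in (0:ℝ)..(a ξ),
        (ξ + (c ^ 2 - (a ξ) ^ 2) / 2 - s ^ 2) *
          Real.sqrt (((a ξ) ^ 2 - s ^ 2) / (c ^ 2 - s ^ 2)) = 0) :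
    ∀ ξ ∈ Set.Ioo (-c ^ 2 / 2) (c ^ 2 / 3),
      (-(1 / 2) * (∫ s in (-(a ξ))..(a ξ),
            (Real.sqrt ((c ^ 2 - s ^ 2) * ((a ξ) ^ 2 - s ^ 2)))⁻¹)⁻¹) / (6 * Real.pi) *
        deriv (fun t => 24 * ∫ s in (a t)..c,
          (t + (c ^ 2 - (a t) ^ 2) / 2 - s ^ 2) *
            Real.sqrt ((s ^ 2 - (a t) ^ 2) / (c ^ 2 - s ^ 2))) ξ =
      -c ^ 2 /
        (2 * (∫ t in (0:ℝ)..1, (Real.sqrt ((1 - t ^ 2) * (1 - (a ξ / c) ^ 2 * t ^ 2)))⁻¹) ^ 2) := by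
  intro ξ hξ
  obtain ⟨ha, hac⟩ := hrange ξ hξ
  have hnh : Set.Ioo (-c ^ 2 / 2) (c ^ 2 / 3) ∈ nhds ξ := isOpen_Ioo.mem_nhds hξ
  rw [tc_K ha hac, tc_Gam ha hac]
  have hp := pow_pos hc 2
  have hw := pow_pos ha 2
  have hq : 0 < c ^ 2 - (a ξ) ^ 2 := by nlinarith
  have hne1 : c ^ 2 ≠ (a ξ) ^ 2 := by linarith
  have hne2 : c ^ 2 ≠ c ^ 2 - (a ξ) ^ 2 := by linarith
  have hda := (hdiff ξ hξ).hasDerivAt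
  have hdw : HasDerivAt (fun t => a t ^ 2) (2 * a ξ * deriv a ξ) ξ := by
    refine (hda.pow 2).congr_deriv ?_
    push_cast; ring
  have hdq : HasDerivAt (fun t => c ^ 2 - a t ^ 2) (-(2 * a ξ * deriv a ξ)) ξ := hdw.const_sub _
  have hlin : HasDerivAt (fun t => t - c ^ 2 / 6 - a t ^ 2 / 6) (1 - 2 * a ξ * deriv a ξ / 6) ξ :=
    ((hasDerivAt_id ξ).sub_const _).sub (hdw.div_const 6)
  have hco : HasDerivAt (fun t => a t ^ 2 * (c ^ 2 - a t ^ 2) / 3)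
      ((2 * a ξ * deriv a ξ * (c ^ 2 - a ξ ^ 2) + a ξ ^ 2 * (-(2 * a ξ * deriv a ξ))) / 3) ξ :=
    (hdw.mul hdq).div_const 3
  have dJ1 := HasDerivAt.comp (h₂ := tcJ (c ^ 2)) (h := fun t => c ^ 2 - a t ^ 2) ξ
    (tc_dJ hp hq hne2) hdq
  have dG1 := HasDerivAt.comp (h₂ := tcG (c ^ 2)) (h := fun t => c ^ 2 - a t ^ 2) ξ
    (tc_dG hp hq hne2) hdq
  have dJ2 := HasDerivAt.comp (h₂ := tcJ (c ^ 2)) (h := fun t => a t ^ 2) ξ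
    (tc_dJ hp hw hne1) hdw
  have dG2 := HasDerivAt.comp (h₂ := tcG (c ^ 2)) (h := fun t => a t ^ 2) ξ
    (tc_dG hp hw hne1) hdw
  have dN := (hlin.mul dJ1).add (hco.mul dG1)
  have dB := ((hlin.mul dJ2).sub (hco.mul dG2)).const_mul 24
  have hN0 := dN.unique ((hasDerivAt_const ξ (0:ℝ)).congr_of_eventuallyEq (by
    filter_upwards [hnh] with t ht
    obtain ⟨h1, h2⟩ := hrange t ht
    exact (tc_N h1 h2 t).symm.trans (hnorm t ht)))
  have hB := (dB.congr_of_eventuallyEq (f₁ := fun t => 24 * ∫ s in (a t)..c,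
          (t + (c ^ 2 - (a t) ^ 2) / 2 - s ^ 2) *
            Real.sqrt ((s ^ 2 - (a t) ^ 2) / (c ^ 2 - s ^ 2))) (by
    filter_upwards [hnh] with t ht
    obtain ⟨h1, h2⟩ := hrange t ht
    exact congrArg (fun x => 24 * x) (tc_B h1 h2 t))).deriv
  have hL := tc_legendre (p := c ^ 2) (w := a ξ ^ 2) ⟨hw, by linarith⟩
  have hG := tcG_pos hp hq
  simp only [Function.comp_apply] at hN0 hB
  change _ = _ at hB
  have eH1 : tcH (c ^ 2) (c ^ 2 - a ξ ^ 2) - (c ^ 2 - a ξ ^ 2) * tcG (c ^ 2) (c ^ 2 - a ξ ^ 2)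
    = tcJ (c ^ 2) (c ^ 2 - a ξ ^ 2) := rfl
  have eH2 : tcH (c ^ 2) (a ξ ^ 2) - (a ξ ^ 2) * tcG (c ^ 2) (a ξ ^ 2)
    = tcJ (c ^ 2) (a ξ ^ 2) := rfl
  rw [eH1] at hN0
  rw [eH2] at hB
  rw [hB]
  set G1 := tcG (c ^ 2) (c ^ 2 - a ξ ^ 2)
  set G2 := tcG (c ^ 2) (a ξ ^ 2)
  set J1 := tcJ (c ^ 2) (c ^ 2 - a ξ ^ 2)
  set J2 := tcJ (c ^ 2) (a ξ ^ 2)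
  generalize deriv a ξ = a' at *
  have hN1 : J1 + a ξ * a' * G1 * (ξ + c ^ 2 / 2 - 3 / 2 * a ξ ^ 2) = 0 := by
    rw [← hN0]
    rw [sub_sub_cancel]
    field_simp
    ring
  have key : 24 * ((1 - 2 * a ξ * a' / 6) * J2 + (ξ - c ^ 2 / 6 - a ξ ^ 2 / 6) * (-G2 / 2 * (2 * a ξ * a'))
      - ((2 * a ξ * a' * (c ^ 2 - a ξ ^ 2) + a ξ ^ 2 * (-(2 * a ξ * a'))) / 3 * G2
        + a ξ ^ 2 * (c ^ 2 - a ξ ^ 2) / 3 * (-J2 / (2 * a ξ ^ 2 * (c ^ 2 - a ξ ^ 2)) * (2 * a ξ * a'))))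
      = 12 * Real.pi / G1 := by
    rw [eq_div_iff hG.ne']
    have : a ξ ^ 2 * (c ^ 2 - a ξ ^ 2) / 3 * (-J2 / (2 * a ξ ^ 2 * (c ^ 2 - a ξ ^ 2)) * (2 * a ξ * a'))
      = -J2 * (a ξ * a') / 3 := by field_simp
    rw [this]
    linear_combination 24 * hL - 24 * G2 * hN1
  rw [key]
  have := Real.pi_pos
  field_simp
  norm_num
end
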